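/- arXiv:1905.13655 — 2 statements merged into one kernel-verified Lean document; each statement's English description precedes it below -/
import Mathlib

section
/- Let N ≥ 3 be an integer, let A₁, …, A_m ∈ ℝ^{d×d} be symmetric, pairwise commuting, linearly independent matrices and y₁, …, y_m ∈ ℝ. For each α > 0 let W_{α,1}, …, W_{α,N} : [0,∞) → ℝ^{d×d} be differentiable with W_{α,j}(0) = α·I for every j and, for all t ≥ 0 and every j ∈ {1,…,N}, W_{α,j}′(t) = −(W_{α,N}(t)⋯W_{α,j+1}(t))ᵀ · ∇ℓ(P_α(t)) · (W_{α,j−1}(t)⋯W_{α,1}(t))ᵀ, where P_α(t) := W_{α,N}(t)·W_{α,N−1}(t)⋯W_{α,1}(t), ∇ℓ(W) = Σ_{i=1}^m (⟨A_i, W⟩ − y_i)·A_i, and empty products are the identity (gradient flow on a depth-N matrix factorization initialized at α·I). Assume that for every α > 0 the limit W_∞(α) := lim_{t→∞} P_α(t) exists, that the limit W̄ := lim_{α→0⁺} W_∞(α) exists, that W̄ is positive semidefinite, and that ⟨A_i, W̄⟩ = y_i for all i. Then W̄ has minimal nuclear norm among feasible positive semidefinite matrices: for every positive semidefinite W ∈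 ℝ^{d×d} with ⟨A_i, W⟩ = y_i for all i, tr(W̄) ≤ tr(W). -/
open Matrix Filter Topology

/-- The Frobenius gradient of the loss `ℓ(W) = ½ Σᵢ (yᵢ − ⟨Aᵢ, W⟩)²`, where
`⟨A, W⟩ = tr(Aᵀ W)` is the Frobenius inner product. -/
noncomputable def gradLoss {d m : ℕ} (A : Fin m → Matrix (Fin d) (Fin d) ℝ)
    (y : Fin m → ℝ) (W : Matrix (Fin d) (Fin d) ℝ) : Matrix (Fin d) (Fin d) ℝ :=
  ∑ i, ((((A i)ᵀ * W).trace) - y i) • A i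

/-- `prodDesc W lo hi = W hi * W (hi-1) * ⋯ * W lo` (the identity matrix if `hi < lo`). -/
def prodDesc {d : ℕ} (W : ℕ → Matrix (Fin d) (Fin d) ℝ) (lo hi : ℕ) :
    Matrix (Fin d) (Fin d) ℝ :=
  ((List.range (hi + 1 - lo)).map (fun i => W (hi - i))).prod

section Uniqueness

/-- Two global forward solutions of an autonomous `C¹` differential equation with the same initial
value coincide. -/
theorem eq_of_hasDerivAt_of_contDiff {E : Type*} [NormedAddCommGroup E] [NormedSpace ℝ E]
    {v : E → E} (hv : ContDiff ℝ 1 v) {f g : ℝ → E}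
    (hf : ∀ t, 0 ≤ t → HasDerivAt f (v (f t)) t) (hg : ∀ t, 0 ≤ t → HasDerivAt g (v (g t)) t)
    (h0 : f 0 = g 0) {t : ℝ} (ht : 0 ≤ t) : f t = g t := by
  have hfc : ContinuousOn f (Set.Icc 0 t) := fun x hx => (hf x hx.1).continuousAt.continuousWithinAt
  have hgc : ContinuousOn g (Set.Icc 0 t) := fun x hx => (hg x hx.1).continuousAt.continuousWithinAt
  have hK : IsCompact (f '' Set.Icc 0 t ∪ g '' Set.Icc 0 t) :=
    (isCompact_Icc.image_of_continuousOn hfc).union (isCompact_Icc.image_of_continuousOn hgc)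
  obtain ⟨K, hLip⟩ :=
    (hv.locallyLipschitz.locallyLipschitzOn (s := f '' Set.Icc 0 t ∪ g '' Set.Icc 0 t)
      ).exists_lipschitzOnWith_of_compact hK
  exact ODE_solution_unique_of_mem_Icc_right (v := fun _ => v)
    (s := fun _ => f '' Set.Icc 0 t ∪ g '' Set.Icc 0 t) (fun _ _ => hLip) hfc
    (fun x hx => (hf x hx.1).hasDerivWithinAt)
    (fun x hx => Or.inl ⟨x, Set.Ico_subset_Icc_self hx, rfl⟩) hgc
    (fun x hx => (hg x hx.1).hasDerivWithinAt)
    (fun x hx => Or.inr ⟨x, Set.Ico_subset_Icc_self hx, rfl⟩) h0 ⟨ht, le_rfl⟩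

/-- A solution of the scalar linear equation `h' = c h` is `h 0` times a positive factor. -/
theorem eq_mul_exp_of_hasDerivAt_mul {h c : ℝ → ℝ} (hc : ContinuousOn c (Set.Ici 0))
    (hh : ∀ t, 0 ≤ t → HasDerivAt h (c t * h t) t) {t : ℝ} (ht : 0 ≤ t) :
    h t = h 0 * Real.exp (∫ s in (0 : ℝ)..t, c (max s 0)) := by
  have hc' : Continuous fun s => c (max s 0) :=
    hc.comp_continuous (by fun_prop) fun s => le_max_right s 0
  have hI : ∀ s, HasDerivAt (fun u => ∫ x in (0 : ℝ)..u, c (max x 0)) (c (max s 0)) s := fun s =>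
    intervalIntegral.integral_hasDerivAt_right (hc'.intervalIntegrable _ _)
      (hc'.stronglyMeasurableAtFilter _ _) hc'.continuousAt
  have hd : ∀ s, 0 ≤ s →
      HasDerivAt (fun u => h u * Real.exp (-∫ x in (0 : ℝ)..u, c (max x 0))) 0 s := by
    intro s hs
    have := (hh s hs).mul (hI s).neg.exp
    rw [max_eq_left hs] at this
    convert! this using 1
    ring
  have hconst := constant_of_has_deriv_right_zero
    (fun x hx => (hd x hx.1).continuousAt.continuousWithinAt)
    (fun x hx => (hd x hx.1).hasDerivWithinAt) t ⟨ht, le_rfl⟩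
  simp only [intervalIntegral.integral_same, neg_zero, Real.exp_zero, mul_one] at hconst
  rw [← hconst, mul_assoc, ← Real.exp_add]
  simp

end Uniqueness

section ProdDesc

variable {d : ℕ}

theorem prodDesc_of_lt {X : ℕ → Matrix (Fin d) (Fin d) ℝ} {lo hi : ℕ} (h : hi < lo) :
    prodDesc X lo hi = 1 := by
  simp [prodDesc, Nat.sub_eq_zero_of_le h]

theorem prodDesc_succ {X : ℕ → Matrix (Fin d) (Fin d) ℝ} {lo hi : ℕ} (h : lo ≤ hi + 1) :
    prodDesc X lo (hi + 1) = X (hi + 1) * prodDesc X lo hi := by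
  unfold prodDesc
  rw [show hi + 1 + 1 - lo = (hi + 1 - lo) + 1 by omega, List.range_succ_eq_map, List.map_cons,
    List.prod_cons, List.map_map]
  simp only [Nat.sub_zero, Function.comp_def, Nat.succ_eq_add_one, Nat.add_sub_add_right]

/-- Induction on the upper end `hi` of an interval of positive integers starting at `lo`. -/
theorem intervalInduction {lo : ℕ} (hlo : 1 ≤ lo) {p : ℕ → Prop} (empty : ∀ hi, hi < lo → p hi)
    (succ : ∀ hi, lo ≤ hi + 1 → p hi → p (hi + 1)) (hi : ℕ) : p hi := by
  induction hi with
  | zero => exact empty 0 hlo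
  | succ k ih => exact (Nat.lt_or_ge (k + 1) lo).elim (empty _) fun h => succ k h ih

theorem prodDesc_congr {X Y : ℕ → Matrix (Fin d) (Fin d) ℝ} {lo hi : ℕ}
    (h : ∀ i, lo ≤ i → i ≤ hi → X i = Y i) : prodDesc X lo hi = prodDesc Y lo hi := by
  unfold prodDesc
  congr 1
  refine List.map_congr_left fun i hi => h _ ?_ ?_ <;> rw [List.mem_range] at hi <;> omega

theorem prodDesc_conj {U V : Matrix (Fin d) (Fin d) ℝ} (hUV : U * V = 1)
    (X : ℕ → Matrix (Fin d) (Fin d) ℝ) {lo : ℕ} (hlo : 1 ≤ lo) (hi : ℕ) :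
    prodDesc (fun i => U * X i * V) lo hi = U * prodDesc X lo hi * V := by
  have hVU : V * U = 1 := mul_eq_one_comm.mp hUV
  induction hi using intervalInduction hlo with
  | empty hi h =>
    simp [prodDesc_of_lt h, hUV]
  | succ hi h ih =>
    rw [prodDesc_succ h, prodDesc_succ h, ih]
    calc U * X (hi + 1) * V * (U * prodDesc X lo hi * V)
        = U * X (hi + 1) * (V * U) * prodDesc X lo hi * V := by simp only [mul_assoc]
      _ = _ := by rw [hVU]; simp only [mul_assoc, mul_one]

theorem prodDesc_diagonal (x : ℕ → Fin d → ℝ) {lo : ℕ} (hlo : 1 ≤ lo) (hi : ℕ) :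
    prodDesc (fun i => diagonal (x i)) lo hi =
      diagonal fun k => ∏ i ∈ Finset.Icc lo hi, x i k := by
  induction hi using intervalInduction hlo with
  | empty hi h =>
    simp [prodDesc_of_lt h, Finset.Icc_eq_empty_of_lt h]
  | succ hi h ih =>
    rw [prodDesc_succ h, ih, diagonal_mul_diagonal]
    congr 1
    ext k
    rw [Finset.prod_Icc_succ_top h, mul_comm]

theorem contDiff_mul_entry {E : Type*} [NormedAddCommGroup E] [NormedSpace ℝ E]
    {X Y : E → Matrix (Fin d) (Fin d) ℝ} (hX : ∀ p q, ContDiff ℝ 1 fun e => X e p q)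
    (hY : ∀ p q, ContDiff ℝ 1 fun e => Y e p q) (p q : Fin d) :
    ContDiff ℝ 1 fun e => (X e * Y e) p q := by
  simp only [mul_apply]
  exact ContDiff.sum fun k _ => (hX p k).mul (hY k q)

theorem contDiff_prodDesc_entry {E : Type*} [NormedAddCommGroup E] [NormedSpace ℝ E]
    {X : E → ℕ → Matrix (Fin d) (Fin d) ℝ} (hX : ∀ i p q, ContDiff ℝ 1 fun e => X e i p q)
    {lo : ℕ} (hlo : 1 ≤ lo) (hi : ℕ) :
    ∀ p q, ContDiff ℝ 1 fun e => prodDesc (X e) lo hi p q := by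
  induction hi using intervalInduction hlo with
  | empty hi h =>
    intro p q
    simp only [prodDesc_of_lt h]
    exact contDiff_const
  | succ hi h ih =>
    simp only [prodDesc_succ h]
    exact contDiff_mul_entry (hX _) ih

end ProdDesc

section Flow

variable {d m : ℕ}

/-- The right-hand side of the gradient flow for the `j`-th factor of a depth-`N` factorization. -/
noncomputable def flowField (A : Fin m → Matrix (Fin d) (Fin d) ℝ) (y : Fin m → ℝ) (N : ℕ)
    (X : ℕ → Matrix (Fin d) (Fin d) ℝ) (j : ℕ) : Matrix (Fin d) (Fin d) ℝ :=
  -((prodDesc X (j + 1) N)ᵀ * gradLoss A y (prodDesc X 1 N) * (prodDesc X 1 (j - 1))ᵀ)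

/-- `W` is a trajectory of the gradient flow on a depth-`N` matrix factorization. -/
def IsGradientFlow (A : Fin m → Matrix (Fin d) (Fin d) ℝ) (y : Fin m → ℝ) (N : ℕ)
    (W : ℕ → ℝ → Matrix (Fin d) (Fin d) ℝ) : Prop :=
  ∀ t : ℝ, 0 ≤ t → ∀ j, 1 ≤ j → j ≤ N → ∀ p q : Fin d,
    HasDerivAt (fun s => W j s p q) (flowField A y N (fun i => W i t) j p q) t

theorem gradLoss_conj {A : Fin m → Matrix (Fin d) (Fin d) ℝ} {y : Fin m → ℝ}
    {U : Matrix (Fin d) (Fin d) ℝ} (hU : Uᵀ * U = 1) (P : Matrix (Fin d) (Fin d) ℝ) :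
    gradLoss (fun i => Uᵀ * A i * U) y (Uᵀ * P * U) = Uᵀ * gradLoss A y P * U := by
  have hU' : U * Uᵀ = 1 := mul_eq_one_comm.mp hU
  have key : ∀ i, ((Uᵀ * A i * U)ᵀ * (Uᵀ * P * U)).trace = ((A i)ᵀ * P).trace := by
    intro i
    calc ((Uᵀ * A i * U)ᵀ * (Uᵀ * P * U)).trace
        = (Uᵀ * ((A i)ᵀ * (U * Uᵀ) * P * U)).trace := by
          simp only [transpose_mul, transpose_transpose, mul_assoc]
      _ = ((A i)ᵀ * P).trace := by
          rw [trace_mul_comm, hU', mul_one, mul_assoc, hU', mul_one]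
  unfold gradLoss
  simp only [key, Finset.mul_sum, Finset.sum_mul, Matrix.mul_smul, Matrix.smul_mul]

theorem flowField_conj {A : Fin m → Matrix (Fin d) (Fin d) ℝ} {y : Fin m → ℝ} {N : ℕ}
    {U : Matrix (Fin d) (Fin d) ℝ} (hU : Uᵀ * U = 1) (X : ℕ → Matrix (Fin d) (Fin d) ℝ) (j : ℕ) :
    flowField (fun i => Uᵀ * A i * U) y N (fun i => Uᵀ * X i * U) j =
      Uᵀ * flowField A y N X j * U := by
  have hU' : U * Uᵀ = 1 := mul_eq_one_comm.mp hU
  unfold flowField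
  rw [prodDesc_conj hU X (by omega), prodDesc_conj hU X le_rfl, prodDesc_conj hU X le_rfl,
    gradLoss_conj hU]
  generalize prodDesc X (j + 1) N = B, gradLoss A y (prodDesc X 1 N) = G,
    prodDesc X 1 (j - 1) = C
  have : (Uᵀ * B * U)ᵀ * (Uᵀ * G * U) * (Uᵀ * C * U)ᵀ =
      Uᵀ * Bᵀ * (U * Uᵀ) * G * (U * Uᵀ) * Cᵀ * U := by
    simp only [transpose_mul, transpose_transpose, mul_assoc]
  rw [this, hU']
  simp only [mul_assoc, mul_one, Matrix.mul_neg, Matrix.neg_mul]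

theorem hasDerivAt_mul_mul_entry {M : ℝ → Matrix (Fin d) (Fin d) ℝ}
    {M' B C : Matrix (Fin d) (Fin d) ℝ} {t : ℝ}
    (h : ∀ p q, HasDerivAt (fun s => M s p q) (M' p q) t) (p q : Fin d) :
    HasDerivAt (fun s => (B * M s * C) p q) ((B * M' * C) p q) t := by
  simp only [mul_apply]
  exact HasDerivAt.fun_sum fun k _ =>
    (HasDerivAt.fun_sum fun l _ => (h l k).const_mul (B p l)).mul_const (C k q)

theorem IsGradientFlow.conj {A : Fin m → Matrix (Fin d) (Fin d) ℝ} {y : Fin m → ℝ} {N : ℕ}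
    {W : ℕ → ℝ → Matrix (Fin d) (Fin d) ℝ} (hW : IsGradientFlow A y N W)
    {U : Matrix (Fin d) (Fin d) ℝ} (hU : Uᵀ * U = 1) :
    IsGradientFlow (fun i => Uᵀ * A i * U) y N (fun j t => Uᵀ * W j t * U) := by
  intro t ht j h1 hN p q
  rw [flowField_conj hU]
  exact hasDerivAt_mul_mul_entry (hW t ht j h1 hN) p q

theorem contDiff_flowField_entry {E : Type*} [NormedAddCommGroup E] [NormedSpace ℝ E]
    (A : Fin m → Matrix (Fin d) (Fin d) ℝ) (y : Fin m → ℝ) (N : ℕ)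
    {X : E → ℕ → Matrix (Fin d) (Fin d) ℝ} (hX : ∀ i p q, ContDiff ℝ 1 fun e => X e i p q)
    (j : ℕ) (p q : Fin d) : ContDiff ℝ 1 fun e => flowField A y N (X e) j p q := by
  have hG : ∀ p q, ContDiff ℝ 1 fun e => gradLoss A y (prodDesc (X e) 1 N) p q := by
    intro p q
    simp only [gradLoss, Matrix.sum_apply, Matrix.smul_apply, smul_eq_mul, trace, diag_apply]
    refine ContDiff.sum fun i _ => ContDiff.mul (ContDiff.sub (ContDiff.sum fun k _ => ?_)
      contDiff_const) contDiff_const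
    exact contDiff_mul_entry (X := fun _ => (A i)ᵀ) (fun _ _ => contDiff_const)
      (contDiff_prodDesc_entry hX le_rfl N) k k
  simp only [flowField, Matrix.neg_apply]
  refine (contDiff_mul_entry (contDiff_mul_entry (fun p q => ?_) hG) (fun p q => ?_) p q).neg
  · exact contDiff_prodDesc_entry hX (by omega) N q p
  · exact contDiff_prodDesc_entry hX le_rfl _ q p

theorem flowField_congr {A : Fin m → Matrix (Fin d) (Fin d) ℝ} {y : Fin m → ℝ} {N : ℕ}
    {X Y : ℕ → Matrix (Fin d) (Fin d) ℝ} (h : ∀ i, 1 ≤ i → i ≤ N → X i = Y i) {j : ℕ}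
    (hj : j ≤ N) : flowField A y N X j = flowField A y N Y j := by
  unfold flowField
  rw [prodDesc_congr fun i h1 h2 => h i (by omega) h2, prodDesc_congr h,
    prodDesc_congr (hi := j - 1) fun i h1 h2 => h i h1 (by omega)]

/-- The gradient flow is determined by the initial values of its factors. -/
theorem IsGradientFlow.unique {A : Fin m → Matrix (Fin d) (Fin d) ℝ} {y : Fin m → ℝ} {N : ℕ}
    {V W : ℕ → ℝ → Matrix (Fin d) (Fin d) ℝ} (hV : IsGradientFlow A y N V)
    (hW : IsGradientFlow A y N W) (h0 : ∀ j, 1 ≤ j → j ≤ N → V j 0 = W j 0)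
    {t : ℝ} (ht : 0 ≤ t) {j : ℕ} (hj : 1 ≤ j) (hjN : j ≤ N) : V j t = W j t := by
  let ext : (Fin N → Fin d → Fin d → ℝ) → ℕ → Matrix (Fin d) (Fin d) ℝ :=
    fun X i => if h : i - 1 < N then of (X ⟨i - 1, h⟩) else 0
  let v : (Fin N → Fin d → Fin d → ℝ) → (Fin N → Fin d → Fin d → ℝ) :=
    fun X i p q => flowField A y N (ext X) (i + 1) p q
  have hext : ∀ i p q, ContDiff ℝ 1 fun X => ext X i p q := by
    intro i p q
    by_cases h : i - 1 < N
    · simp only [ext, h, dif_pos, of_apply]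
      fun_prop
    · simp only [ext, h, dif_neg, not_false_eq_true]
      exact contDiff_const
  have hv : ContDiff ℝ 1 v := by
    refine contDiff_pi.2 fun i => contDiff_pi.2 fun p => contDiff_pi.2 fun q => ?_
    exact contDiff_flowField_entry A y N hext _ p q
  have key : ∀ Z : ℕ → ℝ → Matrix (Fin d) (Fin d) ℝ, IsGradientFlow A y N Z → ∀ t, 0 ≤ t →
      HasDerivAt (fun t (i : Fin N) p q => Z (i + 1) t p q)
        (v fun (i : Fin N) p q => Z (i + 1) t p q) t := by
    intro Z hZ t ht
    refine hasDerivAt_pi.2 fun i => hasDerivAt_pi.2 fun p => hasDerivAt_pi.2 fun q => ?_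
    have := hZ t ht (i + 1) (by omega) (by omega) p q
    convert! this using 1
    refine congrFun (congrFun (flowField_congr (fun k h1 h2 => ?_) (by omega)) p) q
    have hk : k - 1 < N := by omega
    ext a b
    simp [ext, hk, Nat.sub_add_cancel h1]
  have := eq_of_hasDerivAt_of_contDiff hv (key V hV) (key W hW)
    (by funext i p q; simp only [h0 (i + 1) (by omega) (by omega)]) ht
  have := congrFun this ⟨j - 1, by omega⟩
  simp only [Nat.sub_add_cancel hj] at this
  ext p q
  exact congrFun (congrFun this p) q

end Flow

section DiagonalFlow

variable {d m : ℕ}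

theorem gradLoss_diagonal (c : Fin m → Fin d → ℝ) (y : Fin m → ℝ) (x : Fin d → ℝ) :
    gradLoss (fun i => diagonal (c i)) y (diagonal x) =
      diagonal fun k => ∑ i, (∑ l, c i l * x l - y i) * c i k := by
  ext p q
  by_cases h : p = q
  · subst h
    simp [gradLoss, Matrix.sum_apply, diagonal_transpose, diagonal_mul_diagonal, trace_diagonal]
  · simp [gradLoss, Matrix.sum_apply, h]

/-- Conjugation by coordinate reflections preserves the gradient flow for diagonal measurements, so
its trajectory started at a multiple of the identity stays diagonal. -/
theorem IsGradientFlow.eq_diagonal {c : Fin m → Fin d → ℝ} {y : Fin m → ℝ} {N : ℕ}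
    {W : ℕ → ℝ → Matrix (Fin d) (Fin d) ℝ} (hW : IsGradientFlow (fun i => diagonal (c i)) y N W)
    {α : ℝ} (h0 : ∀ j, 1 ≤ j → j ≤ N → W j 0 = α • (1 : Matrix (Fin d) (Fin d) ℝ))
    {t : ℝ} (ht : 0 ≤ t) {j : ℕ} (hj : 1 ≤ j) (hjN : j ≤ N) :
    W j t = diagonal fun k => W j t k k := by
  ext p q
  by_cases hpq : p = q
  · subst hpq; simp
  rw [diagonal_apply_ne _ hpq]
  let s : Fin d → ℝ := fun k => if k = p then -1 else 1
  have hss : ∀ k, s k * s k = 1 := fun k => by by_cases h : k = p <;> simp [s, h]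
  have hU : (diagonal s)ᵀ * diagonal s = 1 := by
    simp [diagonal_transpose, diagonal_mul_diagonal, hss]
  have hconj := hW.conj hU
  have hA : (fun i => (diagonal s)ᵀ * diagonal (c i) * diagonal s) = fun i => diagonal (c i) := by
    funext i
    simp only [diagonal_transpose, diagonal_mul_diagonal]
    congr 1
    ext k
    rw [mul_right_comm, hss, one_mul]
  rw [hA] at hconj
  have := congrFun (congrFun (hconj.unique hW (fun j h1 h2 => by
    simp only [h0 j h1 h2, Matrix.mul_smul, mul_one, Matrix.smul_mul, hU]) ht hj hjN) p) q
  simp only [diagonal_transpose, mul_diagonal, diagonal_mul, s, if_true, Ne.symm hpq,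
    if_false] at this
  linarith

/-- For diagonal measurements, all factors of the gradient flow started at `α • 1` equal the same
positive diagonal matrix, whose entries solve decoupled scalar equations. -/
theorem IsGradientFlow.exists_scalar_form {c : Fin m → Fin d → ℝ} {y : Fin m → ℝ} {N : ℕ}
    (hN : 2 ≤ N) {W : ℕ → ℝ → Matrix (Fin d) (Fin d) ℝ}
    (hW : IsGradientFlow (fun i => diagonal (c i)) y N W) {α : ℝ} (hα : 0 < α)
    (h0 : ∀ j, 1 ≤ j → j ≤ N → W j 0 = α • (1 : Matrix (Fin d) (Fin d) ℝ)) :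
    ∃ (u : ℝ → Fin d → ℝ) (r : ℝ → Fin m → ℝ), (∀ k, u 0 k = α) ∧
      ∀ t, 0 ≤ t → prodDesc (fun j => W j t) 1 N = diagonal (fun k => u t k ^ N) ∧
        ∀ k, 0 < u t k ∧
          HasDerivAt (fun s => u s k) (-((∑ i, r t i * c i k) * u t k ^ (N - 1))) t := by
  set w : ℕ → ℝ → Fin d → ℝ := fun j t k => W j t k k with hw
  have hdiag : ∀ t, 0 ≤ t → ∀ j, 1 ≤ j → j ≤ N → W j t = diagonal (w j t) :=
    fun t ht j h1 h2 => hW.eq_diagonal h0 ht h1 h2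
  have hprod : ∀ t, 0 ≤ t → ∀ lo hi, 1 ≤ lo → hi ≤ N →
      prodDesc (fun j => W j t) lo hi = diagonal fun k => ∏ i ∈ Finset.Icc lo hi, w i t k := by
    intro t ht lo hi h1 h2
    rw [← prodDesc_diagonal (fun i => w i t) h1 hi]
    exact prodDesc_congr fun i hi1 hi2 => hdiag t ht i (by omega) (by omega)
  set r : ℝ → Fin m → ℝ := fun t i => ∑ l, c i l * ∏ j ∈ Finset.Icc 1 N, w j t l - y i with hr
  set g : ℝ → Fin d → ℝ := fun t k => ∑ i, r t i * c i k with hg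
  have hderiv : ∀ t, 0 ≤ t → ∀ j, 1 ≤ j → j ≤ N → ∀ k, HasDerivAt (fun s => w j s k)
      (-((∏ i ∈ Finset.Icc (j + 1) N, w i t k) * g t k *
        ∏ i ∈ Finset.Icc 1 (j - 1), w i t k)) t := by
    intro t ht j h1 h2 k
    convert hW t ht j h1 h2 k k using 1
    rw [flowField, hprod t ht _ _ (by omega) le_rfl, hprod t ht _ _ le_rfl le_rfl,
      hprod t ht _ _ le_rfl (by omega), gradLoss_diagonal]
    simp [diagonal_transpose, diagonal_mul_diagonal, hg, hr]
  have hwc : ∀ j, 1 ≤ j → j ≤ N → ∀ k, ContinuousOn (fun t => w j t k) (Set.Ici 0) :=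
    fun j h1 h2 k t ht => (hderiv t ht j h1 h2 k).continuousAt.continuousWithinAt
  have hprodc : ∀ lo hi, 1 ≤ lo → hi ≤ N → ∀ k,
      ContinuousOn (fun t => ∏ i ∈ Finset.Icc lo hi, w i t k) (Set.Ici 0) := by
    intro lo hi h1 h2 k
    refine continuousOn_finsetProd _ fun i hi => ?_
    rw [Finset.mem_Icc] at hi
    exact hwc i (by omega) (by omega) k
  have hgc : ∀ k, ContinuousOn (fun t => g t k) (Set.Ici 0) := fun k =>
    continuousOn_finsetSum _ fun i _ => (((continuousOn_finsetSum _ fun l _ =>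
      continuousOn_const.mul (hprodc 1 N le_rfl le_rfl l)).sub continuousOn_const).mul
        continuousOn_const)
  have hw0 : ∀ j, 1 ≤ j → j ≤ N → ∀ k, w j 0 k = α := fun j h1 h2 k => by
    simp [hw, h0 j h1 h2]
  have hstep : ∀ t, 0 ≤ t → ∀ j, 1 ≤ j → j + 1 ≤ N → ∀ k, w (j + 1) t k = w j t k := by
    intro t ht j h1 h2 k
    have := eq_mul_exp_of_hasDerivAt_mul (h := fun t => w (j + 1) t k - w j t k)
      (c := fun t => (∏ i ∈ Finset.Icc (j + 2) N, w i t k) * g t k *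
        ∏ i ∈ Finset.Icc 1 (j - 1), w i t k)
      (((hprodc _ _ (by omega) le_rfl k).mul (hgc k)).mul (hprodc _ _ le_rfl (by omega) k))
      (fun s hs => by
        convert! (hderiv s hs (j + 1) (by omega) h2 k).sub (hderiv s hs j h1 (by omega) k) using 1
        have e1 : ∏ i ∈ Finset.Icc (j + 1) N, w i s k =
            w (j + 1) s k * ∏ i ∈ Finset.Icc (j + 2) N, w i s k := by
          rw [← Finset.mul_prod_Ioc_eq_prod_Icc h2,
              show Finset.Ioc (j + 1) N = Finset.Icc (j + 2) N by ext; simp; omega]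
        have e2 : ∏ i ∈ Finset.Icc 1 (j + 1 - 1), w i s k =
            (∏ i ∈ Finset.Icc 1 (j - 1), w i s k) * w j s k := by
          obtain ⟨n, rfl⟩ := Nat.exists_eq_add_of_le' h1
          simp only [Nat.add_sub_cancel]
          exact Finset.prod_Icc_succ_top (by omega) _
        rw [e1, e2]
        ring) ht
    simp only [hw0 (j + 1) (by omega) h2, hw0 j h1 (by omega), sub_self, zero_mul] at this
    linarith
  have heq : ∀ t, 0 ≤ t → ∀ j, 1 ≤ j → j ≤ N → ∀ k, w j t k = w 1 t k := by
    intro t ht j h1 hjN k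
    induction j, h1 using Nat.le_induction with
    | base => rfl
    | succ j h1 ih => rw [hstep t ht j h1 hjN k, ih (by omega)]
  have hpow : ∀ t, 0 ≤ t → ∀ lo hi, 1 ≤ lo → hi ≤ N → ∀ k,
      ∏ i ∈ Finset.Icc lo hi, w i t k = w 1 t k ^ (hi + 1 - lo) := by
    intro t ht lo hi h1 h2 k
    rw [← Nat.card_Icc]
    refine Finset.prod_eq_pow_card fun i hi => ?_
    rw [Finset.mem_Icc] at hi
    exact heq t ht i (by omega) (by omega) k
  have hd1 : ∀ t, 0 ≤ t → ∀ k, HasDerivAt (fun s => w 1 s k) (-(g t k * w 1 t k ^ (N - 1))) t := by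
    intro t ht k
    convert hderiv t ht 1 le_rfl (by omega) k using 2
    rw [hpow t ht _ _ (by omega) le_rfl, show N + 1 - (1 + 1) = N - 1 by omega]
    simp [mul_comm]
  refine ⟨w 1, r, hw0 1 le_rfl (by omega), fun t ht => ⟨?_, fun k => ⟨?_, hd1 t ht k⟩⟩⟩
  · rw [hprod t ht 1 N le_rfl le_rfl]
    congr 1
    funext k
    rw [hpow t ht 1 N le_rfl le_rfl, Nat.add_sub_cancel]
  · have := eq_mul_exp_of_hasDerivAt_mul (h := fun t => w 1 t k)
      (c := fun t => -(g t k * w 1 t k ^ (N - 2)))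
      ((hgc k).mul ((hwc 1 le_rfl (by omega) k).pow _)).neg
      (fun s hs => by
        convert! hd1 s hs k using 1
        rw [show N - 1 = N - 2 + 1 by omega, pow_succ]
        ring) ht
    rw [this, hw0 1 le_rfl (by omega)]
    positivity

/-- The dual certificate of the gradient flow: the weights `(α / u t k) ^ (N - 2)` differ from `1`
by a combination of the measurements. -/
theorem sum_div_pow_mul_eq_sum {ι κ : Type*} [Fintype ι] [Fintype κ] {c : κ → ι → ℝ} {n : ℕ}
    {α : ℝ} (hα : 0 < α) {u : ℝ → ι → ℝ} {r : ℝ → κ → ℝ} (hu0 : ∀ k, u 0 k = α)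
    (hpos : ∀ t, 0 ≤ t → ∀ k, 0 < u t k)
    (hd : ∀ t, 0 ≤ t → ∀ k,
      HasDerivAt (fun s => u s k) (-((∑ i, r t i * c i k) * u t k ^ (n + 1))) t)
    {δ : ι → ℝ} (hδ : ∀ i, ∑ k, c i k * δ k = 0) {t : ℝ} (ht : 0 ≤ t) :
    ∑ k, (α / u t k) ^ n * δ k = ∑ k, δ k := by
  have hd' : ∀ s, 0 ≤ s → HasDerivAt (fun s => ∑ k, (α / u s k) ^ n * δ k) 0 s := by
    intro s hs
    have h1 : ∀ k, HasDerivAt (fun s => (α / u s k) ^ n * δ k)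
        (n * α ^ n * ((∑ i, r s i * c i k) * δ k)) s := by
      intro k
      have hne := (hpos s hs k).ne'
      have := (((hasDerivAt_const s α).fun_div (hd s hs k) hne).fun_pow n).mul_const (δ k)
      convert! this using 1
      rcases n with _ | n
      · simp
      · rw [Nat.add_sub_cancel, div_pow]
        field_simp
        ring
    have h2 := HasDerivAt.fun_sum (u := Finset.univ) fun k _ => h1 k
    convert! h2 using 1
    rw [← Finset.mul_sum]
    have : ∑ k, (∑ i, r s i * c i k) * δ k = ∑ i, r s i * ∑ k, c i k * δ k := by
      simp only [Finset.sum_mul, Finset.mul_sum]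
      rw [Finset.sum_comm]
      simp only [mul_assoc]
    simp [this, hδ]
  have := constant_of_has_deriv_right_zero
    (fun x hx => (hd' x hx.1).continuousAt.continuousWithinAt)
    (fun x hx => (hd' x hx.1).hasDerivWithinAt) t ⟨ht, le_rfl⟩
  simpa [hu0, hα.ne'] using this

end DiagonalFlow

section ImplicitBias

variable {d m : ℕ}

theorem eventually_certificate_le {N : ℕ} (hN : 3 ≤ N) {P : ℝ → ℝ → ℝ} {Pinf : ℝ → ℝ} {b : ℝ}
    (hP : ∀ α, 0 < α → Tendsto (P α) atTop (𝓝 (Pinf α))) (hPinf : Tendsto Pinf (𝓝[>] 0) (𝓝 b))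
    (hb : 0 ≤ b) {ε : ℝ} (hε : 0 < ε) :
    ∀ᶠ α in 𝓝[>] (0 : ℝ), ∀ᶠ t in atTop, ∀ x, 0 < x → x ^ N = P α t →
      (α / x) ^ (N - 2) * b ≤ ε := by
  rcases hb.eq_or_lt with rfl | hb
  · exact .of_forall fun α => .of_forall fun t x _ _ => by simpa using hε.le
  set s := min (b / 2) 1 with hs
  have hs0 : 0 < s := by positivity
  have hsmall : ∀ᶠ α in 𝓝[>] (0 : ℝ), α < min s (ε * s / b) :=
    nhdsWithin_le_nhds (Iio_mem_nhds (by positivity))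
  filter_upwards [hPinf.eventually (lt_mem_nhds (half_lt_self hb)), hsmall, self_mem_nhdsWithin]
    with α h1 h2 hα
  rw [Set.mem_Ioi] at hα
  filter_upwards [(hP α hα).eventually (lt_mem_nhds h1)] with t ht x hx hxP
  have hsx : s ≤ x := by
    by_contra! hlt
    have h3 : x ^ N ≤ x :=
      pow_le_of_le_one hx.le (hlt.le.trans (min_le_right _ _)) (by omega)
    linarith [min_le_left (b / 2) 1]
  have h4 : α / x ≤ α / s := div_le_div_of_nonneg_left hα.le hs0 hsx
  have h5 : α / s ≤ 1 := (div_le_one hs0).2 (h2.le.trans (min_le_left _ _))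
  have h6 : (α / x) ^ (N - 2) ≤ α / x :=
    pow_le_of_le_one (by positivity) (h4.trans h5) (by omega)
  calc (α / x) ^ (N - 2) * b ≤ α / s * b := by gcongr; exact h6.trans h4
    _ ≤ (ε * s / b) / s * b := by gcongr; exact h2.le.trans (min_le_right _ _)
    _ = ε := by field_simp

/-- Implicit bias of the gradient flow for diagonal measurements. -/
theorem trace_le_trace_of_isGradientFlow_diagonal {N : ℕ} (hN : 3 ≤ N) {c : Fin m → Fin d → ℝ}
    {y : Fin m → ℝ} {W : ℝ → ℕ → ℝ → Matrix (Fin d) (Fin d) ℝ}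
    (hW0 : ∀ α : ℝ, 0 < α → ∀ j, 1 ≤ j → j ≤ N → W α j 0 = α • (1 : Matrix (Fin d) (Fin d) ℝ))
    (hW : ∀ α : ℝ, 0 < α → IsGradientFlow (fun i => diagonal (c i)) y N (W α))
    {Winf : ℝ → Matrix (Fin d) (Fin d) ℝ}
    (hWinf : ∀ α : ℝ, 0 < α →
      Tendsto (fun t => prodDesc (fun i => W α i t) 1 N) atTop (𝓝 (Winf α)))
    {Wbar : Matrix (Fin d) (Fin d) ℝ} (hWbar : Tendsto Winf (𝓝[>] 0) (𝓝 Wbar))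
    (hWbar_psd : Wbar.PosSemidef) (hWbar_feas : ∀ i, ((diagonal (c i))ᵀ * Wbar).trace = y i)
    {W' : Matrix (Fin d) (Fin d) ℝ} (hW'_psd : W'.PosSemidef)
    (hW'_feas : ∀ i, ((diagonal (c i))ᵀ * W').trace = y i) : Wbar.trace ≤ W'.trace := by
  have hδ : ∀ i, ∑ k, c i k * (W' k k - Wbar k k) = 0 := by
    intro i
    have h := (hW'_feas i).trans (hWbar_feas i).symm
    simp only [diagonal_transpose, trace, diag_apply, diagonal_mul] at h
    simp only [mul_sub, Finset.sum_sub_distrib, h, sub_self]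
  refine le_of_forall_pos_le_add fun ε hε => ?_
  have hε' : 0 < ε / (d + 1) := by positivity
  have hentry : ∀ k, Continuous fun M : Matrix (Fin d) (Fin d) ℝ => M k k := fun k =>
    continuous_id.matrix_elem k k
  have hev : ∀ᶠ α in 𝓝[>] (0 : ℝ), ∀ k, ∀ᶠ t in atTop, ∀ x, 0 < x →
      x ^ N = prodDesc (fun i => W α i t) 1 N k k →
        (α / x) ^ (N - 2) * Wbar k k ≤ ε / (d + 1) :=
    eventually_all.2 fun k => eventually_certificate_le hN
      (P := fun α t => prodDesc (fun i => W α i t) 1 N k k) (Pinf := fun α => Winf α k k)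
      (fun α hα => ((hentry k).tendsto _).comp (hWinf α hα))
      (((hentry k).tendsto _).comp hWbar) hWbar_psd.diag_nonneg hε'
  obtain ⟨α, hα, hα0⟩ := (hev.and self_mem_nhdsWithin).exists
  obtain ⟨t, hcert, ht⟩ := ((eventually_all.2 hα).and (eventually_ge_atTop 0)).exists
  obtain ⟨u, r, hu0, hu⟩ := (hW α hα0).exists_scalar_form (by omega) hα0 (hW0 α hα0)
  have hsum := sum_div_pow_mul_eq_sum (n := N - 2) hα0 hu0 (fun t ht k => ((hu t ht).2 k).1)
    (fun t ht k => by
      rw [show N - 2 + 1 = N - 1 by omega]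
      exact ((hu t ht).2 k).2) hδ ht
  have hle : ∑ _k : Fin d, -(ε / (d + 1)) ≤ ∑ k, (α / u t k) ^ (N - 2) * (W' k k - Wbar k k) := by
    refine Finset.sum_le_sum fun k _ => ?_
    have hpos := ((hu t ht).2 k).1
    have h1 := hcert k (u t k) hpos (by rw [(hu t ht).1, diagonal_apply_eq])
    have h2 : 0 ≤ (α / u t k) ^ (N - 2) * W' k k :=
      mul_nonneg (by positivity) hW'_psd.diag_nonneg
    rw [mul_sub]
    linarith
  have hbound : d * (ε / (d + 1)) ≤ ε := by
    rw [mul_div_assoc', div_le_iff₀ (by positivity)]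
    nlinarith
  rw [hsum, Finset.sum_sub_distrib, Finset.sum_const, Finset.card_univ, Fintype.card_fin,
    nsmul_eq_mul] at hle
  simp only [trace, diag_apply]
  linarith

/-- Commuting real symmetric matrices are simultaneously orthogonally diagonalizable. -/
theorem exists_orthogonal_diagonalization {ι : Type*} {A : ι → Matrix (Fin d) (Fin d) ℝ}
    (hsymm : ∀ i, (A i).IsSymm) (hcomm : ∀ i j, Commute (A i) (A j)) :
    ∃ (U : Matrix (Fin d) (Fin d) ℝ) (c : ι → Fin d → ℝ), Uᵀ * U = 1 ∧
      ∀ i, Uᵀ * A i * U = diagonal (c i) := by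
  classical
  let T : ι → EuclideanSpace ℝ (Fin d) →ₗ[ℝ] EuclideanSpace ℝ (Fin d) :=
    fun i => toEuclideanLin (A i)
  have hT : ∀ i, (T i).IsSymmetric := fun i =>
    isSymmetric_toEuclideanLin_iff.2 <| by
      rw [IsHermitian, conjTranspose_eq_transpose_of_trivial]
      exact hsymm i
  have hTA : ∀ i x, (T i x).ofLp = A i *ᵥ x.ofLp := fun i x => rfl
  have hC : Pairwise (Function.onFun Commute T) := by
    intro i j _
    refine LinearMap.ext fun x => (WithLp.ofLp_injective 2) ?_
    simp only [Module.End.mul_apply, hTA, mulVec_mulVec, (hcomm i j).eq]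
  have hV := LinearMap.IsSymmetric.directSum_isInternal_of_pairwise_commute hT hC
  have horth := LinearMap.IsSymmetric.orthogonalFamily_iInf_eigenspaces hT
  have hV' := DirectSum.isInternal_ne_bot_iff.2 hV
  have := iSupIndep.fintypeNeBotOfFiniteDimensional horth.independent
  have horth' := horth.comp (Subtype.val_injective
    (p := fun χ : ι → ℝ => (⨅ j, Module.End.eigenspace (T j) (χ j)) ≠ ⊥))
  have hn : Module.finrank ℝ (EuclideanSpace ℝ (Fin d)) = d := finrank_euclideanSpace_fin
  let b := hV'.subordinateOrthonormalBasis hn horth'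
  let χ : Fin d → ι → ℝ := fun a => (hV'.subordinateOrthonormalBasisIndex hn a horth').1
  have hb : ∀ a i, A i *ᵥ (b a).ofLp = χ a i • (b a).ofLp := by
    intro a i
    have hmem := hV'.subordinateOrthonormalBasis_subordinate hn a horth'
    have := Module.End.mem_eigenspace_iff.1 ((Submodule.mem_iInf _).1 hmem i)
    rw [← hTA]
    exact congrArg WithLp.ofLp this
  have hU : (of fun p a => b a p)ᵀ * (of fun p a => b a p) = (1 : Matrix (Fin d) (Fin d) ℝ) := by
    ext a a'
    have := orthonormal_iff_ite.1 b.orthonormal a' a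
    rw [PiLp.inner_apply] at this
    simpa [mul_apply, one_apply, eq_comm] using this
  refine ⟨of fun p a => b a p, fun i a => χ a i, hU, fun i => ?_⟩
  have hAU : A i * (of fun p a => b a p) =
      (of fun p a => b a p) * diagonal fun a => χ a i := by
    ext p a
    have := congrFun (hb a i) p
    rw [mul_diagonal]
    simpa [mul_apply, mulVec, dotProduct, mul_comm] using this
  rw [mul_assoc, hAU, ← mul_assoc, hU, one_mul]

end ImplicitBias

/-- Gradient flow on a depth-`N` matrix factorization (`N ≥ 3`) initialized at `α·I`
(for commuting, symmetric, linearly independent measurement matrices): the limit of the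
product matrix, as `t → ∞` and then `α → 0⁺`, if it exists, is PSD and feasible, is a
feasible PSD matrix of minimal nuclear norm (= trace, for PSD matrices). -/
theorem stmt1 {d m : ℕ} (N : ℕ) (hN : 3 ≤ N)
    (A : Fin m → Matrix (Fin d) (Fin d) ℝ) (y : Fin m → ℝ)
    (hA_symm : ∀ i, (A i).IsSymm)
    (hA_comm : ∀ i j, Commute (A i) (A j))
    (hA_li : LinearIndependent ℝ A)
    (W : ℝ → ℕ → ℝ → Matrix (Fin d) (Fin d) ℝ)
    (hW_init : ∀ α : ℝ, 0 < α → ∀ j, 1 ≤ j → j ≤ N →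
      W α j 0 = α • (1 : Matrix (Fin d) (Fin d) ℝ))
    (hW_flow : ∀ α : ℝ, 0 < α → ∀ t : ℝ, 0 ≤ t → ∀ j, 1 ≤ j → j ≤ N → ∀ p q : Fin d,
      HasDerivAt (fun s => W α j s p q)
        ((-((prodDesc (fun i => W α i t) (j + 1) N)ᵀ *
            gradLoss A y (prodDesc (fun i => W α i t) 1 N) *
            (prodDesc (fun i => W α i t) 1 (j - 1))ᵀ)) p q) t)
    (Winf : ℝ → Matrix (Fin d) (Fin d) ℝ)
    (hWinf : ∀ α : ℝ, 0 < α →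
      Tendsto (fun t => prodDesc (fun i => W α i t) 1 N) atTop (nhds (Winf α)))
    (Wbar : Matrix (Fin d) (Fin d) ℝ)
    (hWbar : Tendsto Winf (nhdsWithin 0 (Set.Ioi 0)) (nhds Wbar))
    (hWbar_psd : Wbar.PosSemidef)
    (hWbar_feas : ∀ i, ((A i)ᵀ * Wbar).trace = y i) :
    ∀ W' : Matrix (Fin d) (Fin d) ℝ, W'.PosSemidef →
      (∀ i, ((A i)ᵀ * W').trace = y i) → Wbar.trace ≤ W'.trace := by
  intro W' hW'_psd hW'_feas
  obtain ⟨U, c, hU, hc⟩ := exists_orthogonal_diagonalization hA_symm hA_comm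
  have hU' : U * Uᵀ = 1 := mul_eq_one_comm.mp hU
  have htrace : ∀ M : Matrix (Fin d) (Fin d) ℝ, (Uᵀ * M * U).trace = M.trace := fun M => by
    rw [trace_mul_comm, ← mul_assoc, hU', one_mul]
  have hfeas : ∀ i M, ((diagonal (c i))ᵀ * (Uᵀ * M * U)).trace = ((A i)ᵀ * M).trace := by
    intro i M
    rw [← htrace ((A i)ᵀ * M), ← hc i]
    congr 1
    calc (Uᵀ * A i * U)ᵀ * (Uᵀ * M * U) = Uᵀ * (A i)ᵀ * (U * Uᵀ) * M * U := by
          simp only [transpose_mul, transpose_transpose, mul_assoc]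
      _ = _ := by rw [hU', mul_one, mul_assoc Uᵀ]
  have hcont : Continuous fun M : Matrix (Fin d) (Fin d) ℝ => Uᵀ * M * U := by fun_prop
  have hpsd : ∀ M : Matrix (Fin d) (Fin d) ℝ, M.PosSemidef → (Uᵀ * M * U).PosSemidef :=
    fun M hM => by simpa [conjTranspose_eq_transpose_of_trivial] using
      hM.conjTranspose_mul_mul_same U
  rw [← htrace Wbar, ← htrace W']
  refine trace_le_trace_of_isGradientFlow_diagonal hN (c := c) (y := y)
    (W := fun α j t => Uᵀ * W α j t * U) (Winf := fun α => Uᵀ * Winf α * U) ?_ ?_ ?_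
    ((hcont.tendsto _).comp hWbar) (hpsd _ hWbar_psd) (fun i => (hfeas i _).trans (hWbar_feas i))
    (hpsd _ hW'_psd) (fun i => (hfeas i _).trans (hW'_feas i))
  · intro α hα j h1 h2
    simp only [hW_init α hα j h1 h2, Matrix.mul_smul, mul_one, Matrix.smul_mul, hU]
  · intro α hα
    have hflow : IsGradientFlow A y N (W α) := hW_flow α hα
    have := hflow.conj hU
    simpa only [hc] using this
  · intro α hα
    simp only [prodDesc_conj hU _ le_rfl]
    exact (hcont.tendsto _).comp (hWinf α hα)
end

section
/- Let ℓ : ℝ^{d×d'} → ℝ be real-analytic, let N ≥ 1 and d = d_N, d₁, …, d_{N−1}, d' = d₀ be positive integers, and let W_j : I → ℝ^{d_j×d_{j−1}} (j = 1, …, N) be differentiable maps on an open interval I satisfying, for all t ∈ I and every j, the gradient-flow equations W_j′(t) = −(W_N(t)⋯W_{j+1}(t))ᵀ · ∇ℓ(W(t)) · (W_{j−1}(t)⋯W₁(t))ᵀ, where W(t) := W_N(t)·W_{N−1}(t)⋯W₁(t) and empty products are the identity. Then the product matrix admits an analytic singular value decomposition: with k := min(d, d'), there exist real-analytic maps U :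 I → ℝ^{d×k}, σ : I → ℝ^k, V : I → ℝ^{d'×k} such that for every t ∈ I, W(t) = U(t)·diag(σ(t))·V(t)ᵀ, and the columns of U(t) and of V(t) are orthonormal (the diagonal entries σ_r(t) may be negative and may appear in any order). -/
open Matrix Filter Topology

attribute [local instance] Matrix.normedAddCommGroup Matrix.normedSpace

/-- `chainProd dims Wt lo hi = Wt hi * Wt (hi − 1) * ⋯ * Wt (lo + 1)`
(the identity matrix when `hi = lo`; junk when `hi < lo`, which is never used). -/
noncomputable def chainProd (dims : ℕ → ℕ)
    (Wt : (j : ℕ) → Matrix (Fin (dims j)) (Fin (dims (j - 1))) ℝ) (lo : ℕ) :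
    (hi : ℕ) → Matrix (Fin (dims hi)) (Fin (dims lo)) ℝ
  | 0 => if h : (0 : ℕ) = lo then by rw [h]; exact 1 else 0
  | n + 1 =>
      if h : n + 1 = lo then by rw [h]; exact 1
      else (show Matrix (Fin (dims (n + 1))) (Fin (dims n)) ℝ from Wt (n + 1)) *
        chainProd dims Wt lo n

/-- Pointwise application of a continuous multilinear map to continuous functions. -/
noncomputable def ContinuousMultilinearMap.compContinuousMaps {E G K : Type*}
    [NormedAddCommGroup E] [NormedSpace ℝ E] [NormedAddCommGroup G] [NormedSpace ℝ G]
    [TopologicalSpace K] [CompactSpace K] {n : ℕ}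
    (m : ContinuousMultilinearMap ℝ (fun _ : Fin n => E) G) :
    ContinuousMultilinearMap ℝ (fun _ : Fin n => C(K, E)) C(K, G) :=
  MultilinearMap.mkContinuous
    { toFun := fun y => ⟨fun τ => m (fun i => y i τ),
        m.cont.comp (continuous_pi fun i => (y i).continuous)⟩
      map_update_add' := by
        intro _ y i a b
        ext τ
        have h : ∀ c : C(K, E), (fun j => Function.update y i c j τ) =
            Function.update (fun j => y j τ) i (c τ) := by
          intro c
          funext j
          by_cases hj : j = i
          · subst hj; simp
          · simp [hj]
        change m _ = _
        rw [h]
        simp [← h, ContinuousMultilinearMap.map_update_add]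
      map_update_smul' := by
        intro _ y i a b
        ext τ
        have h : ∀ c : C(K, E), (fun j => Function.update y i c j τ) =
            Function.update (fun j => y j τ) i (c τ) := by
          intro c
          funext j
          by_cases hj : j = i
          · subst hj; simp
          · simp [hj]
        change m _ = _
        rw [h]
        simp [← h, ContinuousMultilinearMap.map_update_smul] } ‖m‖
    (by
      intro y
      rw [ContinuousMap.norm_le _ (by positivity)]
      intro τ
      refine (m.le_opNorm _).trans ?_
      gcongr with i
      exact (y i).norm_coe_le_norm τ)

theorem ContinuousMultilinearMap.norm_compContinuousMaps_le {E G K : Type*}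
    [NormedAddCommGroup E] [NormedSpace ℝ E] [NormedAddCommGroup G] [NormedSpace ℝ G]
    [TopologicalSpace K] [CompactSpace K] {n : ℕ}
    (m : ContinuousMultilinearMap ℝ (fun _ : Fin n => E) G) :
    ‖(m.compContinuousMaps : ContinuousMultilinearMap ℝ (fun _ : Fin n => C(K, E)) C(K, G))‖
      ≤ ‖m‖ :=
  MultilinearMap.mkContinuous_norm_le _ (norm_nonneg _) _

/-- Superposition with an analytic function is analytic on the space of continuous functions. -/
theorem AnalyticAt.exists_superposition {E G K : Type*}
    [NormedAddCommGroup E] [NormedSpace ℝ E] [NormedAddCommGroup G] [NormedSpace ℝ G]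
    [CompleteSpace G] [TopologicalSpace K] [CompactSpace K]
    {F : E → G} {x₀ : E} (hF : AnalyticAt ℝ F x₀) :
    ∃ N : C(K, E) → C(K, G), AnalyticAt ℝ N 0 ∧
      ∀ᶠ y in 𝓝 (0 : C(K, E)), ∀ τ, N y τ = F (x₀ + y τ) := by
  obtain ⟨p, r, hp⟩ := hF
  let P : FormalMultilinearSeries ℝ C(K, E) C(K, G) := fun n => (p n).compContinuousMaps
  have hrad : p.radius ≤ P.radius := by
    refine ENNReal.le_of_forall_nnreal_lt fun s hs => ?_
    obtain ⟨C, -, hC⟩ := p.norm_mul_pow_le_of_lt_radius hs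
    refine P.le_radius_of_bound C fun n => le_trans ?_ (hC n)
    gcongr
    exact (p n).norm_compContinuousMaps_le
  have hPpos : 0 < P.radius := (hp.r_pos.trans_le hp.r_le).trans_le hrad
  have hP := P.hasFPowerSeriesOnBall hPpos
  refine ⟨P.sum, hP.analyticAt, ?_⟩
  filter_upwards [Metric.eball_mem_nhds (0 : C(K, E)) hp.r_pos] with y hy τ
  have hyP : y ∈ Metric.eball (0 : C(K, E)) P.radius :=
    Metric.eball_subset_eball (hp.r_le.trans hrad) hy
  have hs : HasSum (fun n => P n fun _ => y) (P.sum y) := by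
    simpa using hP.hasSum hyP
  have hs' := hs.mapL (ContinuousMap.evalCLM ℝ τ : C(K, G) →L[ℝ] G)
  have hyτ : y τ ∈ Metric.eball (0 : E) r := by
    rw [Metric.mem_eball, edist_zero_right] at hy ⊢
    refine lt_of_le_of_lt ?_ hy
    exact enorm_le_iff_norm_le.2 (y.norm_coe_le_norm τ)
  exact hs'.unique (hp.hasSum hyτ)

/-- The analytic implicit function theorem, with the uniqueness of the implicit function. -/
theorem AnalyticAt.exists_implicit {E F G : Type*}
    [NormedAddCommGroup E] [NormedSpace ℝ E] [CompleteSpace E]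
    [NormedAddCommGroup F] [NormedSpace ℝ F] [CompleteSpace F]
    [NormedAddCommGroup G] [NormedSpace ℝ G] [CompleteSpace G]
    {f : E × F → G} {a : E} {b : F} (hf : AnalyticAt ℝ f (a, b)) (L : F ≃L[ℝ] G)
    (hL : HasFDerivAt (fun y => f (a, y)) (L : F →L[ℝ] G) b) :
    ∃ ψ : E → F, AnalyticAt ℝ ψ a ∧ ψ a = b ∧ (∀ᶠ x in 𝓝 a, f (x, ψ x) = f (a, b)) ∧
      ∀ᶠ v in 𝓝 (a, b), f v = f (a, b) → ψ v.1 = v.2 := by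
  have hc : ContDiffAt ℝ ⊤ f (a, b) := hf.contDiffAt
  have hinv : (fderiv ℝ f (a, b) ∘L .inr ℝ E F) = (L : F →L[ℝ] G) := by
    have h1 : HasFDerivAt (fun y => f (a, y)) (fderiv ℝ f (a, b) ∘L .inr ℝ E F) b := by
      have := hf.differentiableAt.hasFDerivAt.comp b (hasFDerivAt_prodMk_right a b)
      exact this
    exact h1.unique hL
  have hinv' : (fderiv ℝ f (a, b) ∘L .inr ℝ E F).IsInvertible := ⟨L, hinv.symm⟩
  refine ⟨hc.implicitFunction (by simp) hinv', ?_, hc.implicitFunction_apply_self _ hinv',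
    hc.eventually_apply_implicitFunction _ hinv', ?_⟩
  · exact (hc.contDiffAt_implicitFunction _ hinv').analyticAt
  · filter_upwards [hc.eventually_apply_eq_iff_implicitFunction (by simp) hinv'] with v hv h
    exact hv.1 h

/-- The primitive vanishing at `0`, as an operator on continuous functions on `[0, 1]`. -/
noncomputable def primitiveCLM (E : Type*) [NormedAddCommGroup E] [NormedSpace ℝ E] :
    C(unitInterval, E) →L[ℝ] C(unitInterval, E) :=
  LinearMap.mkContinuous
    { toFun := fun y => ⟨fun τ => ∫ r in (0 : ℝ)..τ, y (Set.projIcc 0 1 zero_le_one r),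
        (intervalIntegral.continuous_primitive (fun _ _ => Continuous.intervalIntegrable
          (by fun_prop) _ _) 0).comp continuous_subtype_val⟩
      map_add' := by
        intro y z
        ext τ
        exact intervalIntegral.integral_add (Continuous.intervalIntegrable (by fun_prop) _ _)
          (Continuous.intervalIntegrable (by fun_prop) _ _)
      map_smul' := by
        intro c y
        ext τ
        exact intervalIntegral.integral_smul _ _ } 1
    (by
      intro y
      rw [ContinuousMap.norm_le _ (by positivity)]
      intro τ
      refine (intervalIntegral.norm_integral_le_of_norm_le_const (C := ‖y‖)
        fun r _ => y.norm_coe_le_norm _).trans ?_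
      rw [sub_zero, abs_of_nonneg τ.2.1, one_mul]
      exact mul_le_of_le_one_right (norm_nonneg _) τ.2.2)

theorem primitiveCLM_apply {E : Type*} [NormedAddCommGroup E] [NormedSpace ℝ E]
    (y : C(unitInterval, E)) (τ : unitInterval) :
    primitiveCLM E y τ = ∫ r in (0 : ℝ)..τ, y (Set.projIcc 0 1 zero_le_one r) := rfl

/-- Solutions of an autonomous differential equation with analytic vector field are analytic. -/
theorem analyticAt_of_eventually_hasDerivAt {E : Type*} [NormedAddCommGroup E] [NormedSpace ℝ E]
    [CompleteSpace E] {F : E → E} {x : ℝ → E} {t₀ : ℝ} (hF : AnalyticAt ℝ F (x t₀))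
    (hx : ∀ᶠ t in 𝓝 t₀, HasDerivAt x (F (x t)) t) : AnalyticAt ℝ x t₀ := by
  obtain ⟨N, hN, hNF⟩ := hF.exists_superposition (K := unitInterval)
  let f : ℝ × C(unitInterval, E) → C(unitInterval, E) := fun v => v.2 - v.1 • primitiveCLM E (N v.2)
  have hf : AnalyticAt ℝ f (0, 0) := by
    have h1 : AnalyticAt ℝ (fun v : ℝ × C(unitInterval, E) => primitiveCLM E (N v.2)) (0, 0) :=
      ((primitiveCLM E).analyticAt _).comp
        (AnalyticAt.comp (g := N) (f := Prod.snd) (x := ((0 : ℝ), (0 : C(unitInterval, E))))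
          hN analyticAt_snd)
    exact analyticAt_snd.sub (analyticAt_fst.smul h1)
  obtain ⟨ψ, hψ, -, -, huniq⟩ := hf.exists_implicit (ContinuousLinearEquiv.refl ℝ _) (by
    have h0 : (fun y => f (0, y)) = id := by
      funext y
      simp [f]
    rw [h0]
    exact hasFDerivAt_id _)
  obtain ⟨ε, hε, hball⟩ := Metric.eventually_nhds_iff.1 hx
  have hmem : ∀ s : ℝ, |s| < ε → ∀ r : ℝ, r ∈ Set.Icc (0 : ℝ) 1 → dist (t₀ + s * r) t₀ < ε := by
    intro s hs r hr
    rw [Real.dist_eq, add_sub_cancel_left, abs_mul, abs_of_nonneg hr.1]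
    exact (mul_le_of_le_one_right (abs_nonneg _) hr.2).trans_lt hs
  have hcont : ∀ s : ℝ, |s| < ε →
      Continuous fun τ : unitInterval => x (t₀ + s * τ) - x t₀ := by
    intro s hs
    refine Continuous.sub (continuous_iff_continuousAt.2 fun τ => ?_) continuous_const
    exact (hball (hmem s hs τ τ.2)).continuousAt.comp (f := fun τ : unitInterval => t₀ + s * (τ : ℝ))
      (by fun_prop)
  classical
  let y : ℝ → C(unitInterval, E) := fun s =>
    if hs : |s| < ε then ⟨fun τ => x (t₀ + s * τ) - x t₀, hcont s hs⟩ else 0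
  have hyv : ∀ s, |s| < ε → ∀ τ, y s τ = x (t₀ + s * τ) - x t₀ := by
    intro s hs τ
    simp [y, hs]
  have hyt : Tendsto y (𝓝 0) (𝓝 0) := by
    rw [Metric.tendsto_nhds]
    intro η hη
    have hxc : ContinuousAt x t₀ := hx.self_of_nhds.continuousAt
    obtain ⟨δ, hδ, hxδ⟩ := Metric.continuousAt_iff.1 hxc (η / 2) (by positivity)
    filter_upwards [Metric.ball_mem_nhds (0 : ℝ) hε, Metric.ball_mem_nhds (0 : ℝ) hδ] with s h1 h2
    rw [mem_ball_zero_iff, Real.norm_eq_abs] at h1 h2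
    rw [dist_zero_right]
    refine lt_of_le_of_lt ((ContinuousMap.norm_le _ (by positivity : 0 ≤ η / 2)).2 fun τ => ?_)
      (half_lt_self hη)
    rw [hyv s h1, ← dist_eq_norm]
    refine (hxδ ?_).le
    rw [Real.dist_eq, add_sub_cancel_left, abs_mul, abs_of_nonneg τ.2.1]
    exact (mul_le_of_le_one_right (abs_nonneg _) τ.2.2).trans_lt h2
  have hy0 : ∀ᶠ s in 𝓝 (0 : ℝ), ψ s = y s := by
    have ht : Tendsto (fun s => (s, y s)) (𝓝 0) (𝓝 ((0 : ℝ), (0 : C(unitInterval, E)))) := by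
      rw [nhds_prod_eq]
      exact tendsto_id.prodMk hyt
    filter_upwards [ht.eventually huniq, hyt.eventually hNF, Metric.ball_mem_nhds (0 : ℝ) hε]
      with s h1 h2 h3
    rw [mem_ball_zero_iff, Real.norm_eq_abs] at h3
    refine h1 ?_
    ext τ
    have hftc : ∫ r in (0 : ℝ)..τ, s • F (x (t₀ + s * r)) = x (t₀ + s * τ) - x (t₀ + s * 0) := by
      have hsub : ∀ r ∈ Set.uIcc (0 : ℝ) τ, r ∈ Set.Icc (0 : ℝ) 1 := by
        intro r hr
        rw [Set.uIcc_of_le τ.2.1] at hr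
        exact ⟨hr.1, hr.2.trans τ.2.2⟩
      refine intervalIntegral.integral_eq_sub_of_hasDerivAt
        (f := fun r => x (t₀ + s * r)) (fun r hr => ?_) ?_
      · have := hball (hmem s h3 r (hsub r hr))
        refine this.scomp r ?_
        simpa using ((hasDerivAt_id r).const_mul s).const_add t₀
      · have hc : Continuous fun r : ℝ => s • N (y s) (Set.projIcc 0 1 zero_le_one r) := by
          fun_prop
        refine (hc.intervalIntegrable 0 (τ : ℝ)).congr ?_
        intro r hr
        have hr' := hsub r (Set.uIoc_subset_uIcc hr)
        simp only
        rw [h2, hyv s h3, Set.projIcc_of_mem _ hr']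
        simp
    have hint : ∫ r in (0 : ℝ)..τ, s • F (x (t₀ + s * r)) = s • primitiveCLM E (N (y s)) τ := by
      rw [primitiveCLM_apply, ← intervalIntegral.integral_smul]
      refine intervalIntegral.integral_congr fun r hr => ?_
      rw [Set.uIcc_of_le τ.2.1] at hr
      have hr' : r ∈ Set.Icc (0 : ℝ) 1 := ⟨hr.1, hr.2.trans τ.2.2⟩
      change s • F _ = s • N (y s) _
      rw [h2, hyv s h3, Set.projIcc_of_mem _ hr']
      simp
    have : y s τ = s • primitiveCLM E (N (y s)) τ := by
      rw [hyv s h3, ← hint, hftc, mul_zero, add_zero]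
    simp [f, this]
  have hlin : AnalyticAt ℝ (fun s => x t₀ + ψ s 1) 0 :=
    analyticAt_const.add (((ContinuousMap.evalCLM ℝ (1 : unitInterval) :
      C(unitInterval, E) →L[ℝ] E).analyticAt _).comp hψ)
  have hx0 : AnalyticAt ℝ (fun s => x (t₀ + s)) 0 := by
    refine hlin.congr ?_
    filter_upwards [hy0, Metric.ball_mem_nhds (0 : ℝ) hε] with s h1 h3
    rw [mem_ball_zero_iff, Real.norm_eq_abs] at h3
    rw [h1, hyv s h3]
    simp
  have : AnalyticAt ℝ (fun t => x (t₀ + (t - t₀))) t₀ := by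
    refine AnalyticAt.fun_comp (f := fun t : ℝ => t - t₀) (g := fun s => x (t₀ + s)) ?_
      (analyticAt_id.sub analyticAt_const)
    simpa using hx0
  simpa using this

section MatrixCalculus

variable {E : Type*} [NormedAddCommGroup E] [NormedSpace ℝ E] {x : E}
  {l m n : Type*} [Fintype l] [Fintype m] [Fintype n]

theorem analyticAt_matrix_iff {M : E → Matrix m n ℝ} :
    AnalyticAt ℝ M x ↔ ∀ i j, AnalyticAt ℝ (fun y => M y i j) x := by
  refine (analyticAt_pi_iff (Fm := fun _ : m => n → ℝ) (f := fun i y => M y i)).trans ?_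
  exact forall_congr' fun i =>
    analyticAt_pi_iff (Fm := fun _ : n => ℝ) (f := fun j y => M y i j)

theorem AnalyticAt.matrix_mul {M : E → Matrix l m ℝ} {N : E → Matrix m n ℝ}
    (hM : AnalyticAt ℝ M x) (hN : AnalyticAt ℝ N x) : AnalyticAt ℝ (fun y => M y * N y) x := by
  rw [analyticAt_matrix_iff] at *
  intro i j
  simp only [Matrix.mul_apply]
  exact Finset.analyticAt_fun_sum _ fun k _ => (hM i k).mul (hN k j)

theorem AnalyticAt.matrix_transpose {M : E → Matrix m n ℝ}
    (hM : AnalyticAt ℝ M x) : AnalyticAt ℝ (fun y => (M y)ᵀ) x := by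
  rw [analyticAt_matrix_iff] at *
  exact fun i j => hM j i

theorem AnalyticAt.matrix_submatrix {M : E → Matrix m n ℝ} {m' n' : Type*} [Fintype m']
    [Fintype n'] (hM : AnalyticAt ℝ M x) (f : m' → m) (g : n' → n) :
    AnalyticAt ℝ (fun y => (M y).submatrix f g) x := by
  rw [analyticAt_matrix_iff] at *
  exact fun i j => hM (f i) (g j)

theorem AnalyticAt.matrix_trace {M : E → Matrix m m ℝ}
    (hM : AnalyticAt ℝ M x) : AnalyticAt ℝ (fun y => (M y).trace) x := by
  rw [analyticAt_matrix_iff] at hM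
  exact Finset.analyticAt_fun_sum _ fun k _ => hM k k

theorem AnalyticAt.matrix_det [DecidableEq m] {M : E → Matrix m m ℝ}
    (hM : AnalyticAt ℝ M x) : AnalyticAt ℝ (fun y => (M y).det) x := by
  rw [analyticAt_matrix_iff] at hM
  simp only [Matrix.det_apply']
  exact Finset.analyticAt_fun_sum _ fun σ _ =>
    analyticAt_const.mul (Finset.analyticAt_fun_prod _ fun i _ => hM _ _)

theorem AnalyticAt.matrix_inv [DecidableEq m] {M : E → Matrix m m ℝ}
    (hM : AnalyticAt ℝ M x) (h0 : (M x).det ≠ 0) : AnalyticAt ℝ (fun y => (M y)⁻¹) x := by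
  rw [analyticAt_matrix_iff]
  intro i j
  simp only [Matrix.inv_def, Ring.inverse_eq_inv', Matrix.smul_apply, smul_eq_mul,
    Matrix.adjugate_apply]
  refine (hM.matrix_det.inv h0).mul (AnalyticAt.matrix_det ?_)
  rw [analyticAt_matrix_iff] at hM ⊢
  intro a b
  by_cases h : a = j
  · subst h
    simpa using analyticAt_const
  · simpa [Matrix.updateRow_ne h] using hM a b

theorem hasDerivAt_matrix_iff {M : ℝ → Matrix m n ℝ} {M' : Matrix m n ℝ} {t : ℝ} :
    HasDerivAt M M' t ↔ ∀ i j, HasDerivAt (fun s => M s i j) (M' i j) t := by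
  refine (hasDerivAt_pi (E' := fun _ : m => n → ℝ) (φ := M) (φ' := M')).trans ?_
  exact forall_congr' fun i =>
    hasDerivAt_pi (E' := fun _ : n => ℝ) (φ := fun s => M s i) (φ' := M' i)

theorem HasDerivAt.matrix_mul {M : ℝ → Matrix l m ℝ} {N : ℝ → Matrix m n ℝ}
    {M' : Matrix l m ℝ} {N' : Matrix m n ℝ} {t : ℝ}
    (hM : HasDerivAt M M' t) (hN : HasDerivAt N N' t) :
    HasDerivAt (fun s => M s * N s) (M' * N t + M t * N') t := by
  rw [hasDerivAt_matrix_iff] at *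
  intro i j
  simp only [Matrix.mul_apply, Matrix.add_apply, ← Finset.sum_add_distrib]
  exact HasDerivAt.fun_sum fun k _ => (hM i k).mul (hN k j)

theorem HasDerivAt.matrix_transpose {M : ℝ → Matrix m n ℝ} {M' : Matrix m n ℝ} {t : ℝ}
    (hM : HasDerivAt M M' t) : HasDerivAt (fun s => (M s)ᵀ) M'ᵀ t := by
  rw [hasDerivAt_matrix_iff] at *
  exact fun i j => hM j i

end MatrixCalculus

/-- The skew-symmetric matrix with prescribed lower off-diagonal block. -/
def skewOfBlock {ι : Type*} (p : ι → Prop) [DecidablePred p]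
    (X : {i // ¬p i} × {i // p i} → ℝ) : Matrix ι ι ℝ := fun i j =>
  if hi : p i then if hj : p j then 0 else -X (⟨j, hj⟩, ⟨i, hi⟩)
  else if hj : p j then X (⟨i, hi⟩, ⟨j, hj⟩) else 0

theorem skewOfBlock_transpose {ι : Type*} (p : ι → Prop) [DecidablePred p]
    (X : {i // ¬p i} × {i // p i} → ℝ) : (skewOfBlock p X)ᵀ = -skewOfBlock p X := by
  ext i j
  simp only [skewOfBlock, Matrix.transpose_apply, Matrix.neg_apply]
  split_ifs <;> simp

theorem skewOfBlock_smul {ι : Type*} (p : ι → Prop) [DecidablePred p] (s : ℝ)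
    (X : {i // ¬p i} × {i // p i} → ℝ) : skewOfBlock p (s • X) = s • skewOfBlock p X := by
  ext i j
  simp only [skewOfBlock, Matrix.smul_apply]
  split_ifs <;> simp

theorem analyticAt_skewOfBlock {ι : Type*} [Fintype ι] (p : ι → Prop) [DecidablePred p]
    (X : {i // ¬p i} × {i // p i} → ℝ) : AnalyticAt ℝ (skewOfBlock p) X := by
  rw [analyticAt_matrix_iff]
  intro i j
  simp only [skewOfBlock]
  split_ifs
  · exact analyticAt_const
  · exact ((ContinuousLinearMap.proj (R := ℝ) (φ := fun _ => ℝ) _).analyticAt X).neg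
  · exact (ContinuousLinearMap.proj (R := ℝ) (φ := fun _ => ℝ) _).analyticAt X
  · exact analyticAt_const

/-- The diagonal sign matrix of a decidable predicate. -/
def signMatrix {ι : Type*} [DecidableEq ι] (p : ι → Prop) [DecidablePred p] : Matrix ι ι ℝ :=
  Matrix.diagonal fun i => if p i then 1 else -1

theorem signMatrix_mul_skewOfBlock {ι : Type*} [Fintype ι] [DecidableEq ι] (p : ι → Prop)
    [DecidablePred p] (X : {i // ¬p i} × {i // p i} → ℝ) :
    signMatrix p * skewOfBlock p X = -(skewOfBlock p X * signMatrix p) := by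
  ext i j
  simp only [signMatrix, skewOfBlock, Matrix.diagonal_mul, Matrix.mul_diagonal, Matrix.neg_apply]
  split_ifs <;> simp

theorem commute_signMatrix_iff {ι : Type*} [Fintype ι] [DecidableEq ι] {p : ι → Prop}
    [DecidablePred p] {C : Matrix ι ι ℝ} :
    Commute (signMatrix p) C ↔ ∀ i j, ¬(p i ↔ p j) → C i j = 0 := by
  rw [commute_iff_eq, ← Matrix.ext_iff]
  refine forall_congr' fun i => forall_congr' fun j => ?_
  simp only [signMatrix, Matrix.diagonal_mul, Matrix.mul_diagonal]
  by_cases hi : p i <;> by_cases hj : p j <;> simp [hi, hj] <;> constructor <;> intro h <;> linarith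

/-- Orthogonal block-diagonalization of an analytic symmetric matrix curve along a partition of
the spectrum at the base point. -/
theorem exists_analytic_block_splitting {ι : Type*} [Fintype ι] [DecidableEq ι] (p : ι → Prop)
    [DecidablePred p] {B : ℝ → Matrix ι ι ℝ} {t₀ : ℝ} (hB : AnalyticAt ℝ B t₀)
    (hsymm : ∀ᶠ t in 𝓝 t₀, (B t)ᵀ = B t) {μ : ι → ℝ} (hμ : B t₀ = Matrix.diagonal μ)
    (hp : ∀ i j, ¬p i → p j → μ i ≠ μ j) :
    ∃ U : ℝ → Matrix ι ι ℝ, AnalyticAt ℝ U t₀ ∧ ∀ᶠ t in 𝓝 t₀, (U t)ᵀ * U t = 1 ∧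
      Commute (signMatrix p) ((U t)ᵀ * B t * U t) := by
  let G : ({i // ¬p i} × {i // p i} → ℝ) → Matrix ι ι ℝ := fun X => (1 + skewOfBlock p X) * (1 + skewOfBlock p X)
  have hG : ∀ X, AnalyticAt ℝ G X := fun X =>
    (analyticAt_const.add (analyticAt_skewOfBlock p X)).matrix_mul
      (analyticAt_const.add (analyticAt_skewOfBlock p X))
  let f : ℝ × ({i // ¬p i} × {i // p i} → ℝ) → ({i // ¬p i} × {i // p i} → ℝ) := fun v ij => ((G v.2)ᵀ * B v.1 * G v.2) ij.1 ij.2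
  have hf : AnalyticAt ℝ f (t₀, 0) := by
    have h2 : AnalyticAt ℝ (fun v : ℝ × ({i // ¬p i} × {i // p i} → ℝ) => G v.2) (t₀, 0) :=
      AnalyticAt.comp (g := G) (f := Prod.snd) (hG _) analyticAt_snd
    have h1 : AnalyticAt ℝ (fun v : ℝ × ({i // ¬p i} × {i // p i} → ℝ) => B v.1) (t₀, 0) :=
      AnalyticAt.comp (g := B) (f := Prod.fst) (x := (t₀, (0 : ({i // ¬p i} × {i // p i} → ℝ)))) hB analyticAt_fst
    have h3 := analyticAt_matrix_iff.1 ((h2.matrix_transpose.matrix_mul h1).matrix_mul h2)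
    exact analyticAt_pi_iff.2 fun ij => h3 ij.1 ij.2
  let L : ({i // ¬p i} × {i // p i} → ℝ) ≃L[ℝ] ({i // ¬p i} × {i // p i} → ℝ) := (LinearEquiv.piCongrRight fun ij : {i // ¬p i} × {i // p i} =>
    LinearEquiv.smulOfNeZero ℝ ℝ (2 * (μ ij.1 - μ ij.2))
      (mul_ne_zero (by norm_num) (sub_ne_zero.2 (hp _ _ ij.1.2 ij.2.2)))).toContinuousLinearEquiv
  have hK0 : skewOfBlock p (0 : ({i // ¬p i} × {i // p i} → ℝ)) = 0 := by
    simpa using skewOfBlock_smul p 0 (0 : ({i // ¬p i} × {i // p i} → ℝ))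
  have hL : HasFDerivAt (fun X => f (t₀, X)) (L : ({i // ¬p i} × {i // p i} → ℝ) →L[ℝ] ({i // ¬p i} × {i // p i} → ℝ)) 0 := by
    have hd : DifferentiableAt ℝ (fun X => f (t₀, X)) 0 := by
      have := hf.differentiableAt.comp (0 : ({i // ¬p i} × {i // p i} → ℝ))
        (DifferentiableAt.prodMk (differentiableAt_const t₀) differentiableAt_id)
      exact this
    convert hd.hasFDerivAt using 1
    ext X : 1
    have h1 : HasDerivAt (fun s : ℝ => f (t₀, s • X)) (fderiv ℝ (fun X => f (t₀, X)) 0 X) 0 := by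
      have hs : HasDerivAt (fun s : ℝ => s • X) X 0 := by
        simpa using (hasDerivAt_id (0 : ℝ)).smul_const X
      have hd' : HasFDerivAt (fun X => f (t₀, X)) (fderiv ℝ (fun X => f (t₀, X)) 0)
          ((0 : ℝ) • X) := by
        rw [zero_smul]
        exact hd.hasFDerivAt
      exact hd'.comp_hasDerivAt (0 : ℝ) hs
    refine HasDerivAt.unique ?_ h1
    have hK : HasDerivAt (fun s : ℝ => 1 + skewOfBlock p (s • X)) (skewOfBlock p X) 0 := by
      simp only [skewOfBlock_smul]
      have := ((hasDerivAt_id (0 : ℝ)).smul_const (skewOfBlock p X)).const_add 1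
      rwa [one_smul] at this
    have hGd := hK.matrix_mul hK
    have h3 := (hGd.matrix_transpose.matrix_mul (hasDerivAt_const (0 : ℝ) (B t₀))).matrix_mul hGd
    rw [hasDerivAt_pi]
    rintro ⟨i, j⟩
    refine (hasDerivAt_matrix_iff.1 h3 i j).congr_deriv ?_
    simp only [zero_smul, hK0, hμ, add_zero, mul_one, one_mul, Matrix.transpose_add,
      skewOfBlock_transpose, Matrix.transpose_one, mul_zero, Matrix.add_mul, Matrix.mul_add,
      Matrix.add_apply, Matrix.neg_mul, Matrix.neg_apply, Matrix.diagonal_mul, Matrix.mul_diagonal]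
    simp [L, skewOfBlock, i.2, j.2]
    ring
  have hf0 : f (t₀, 0) = 0 := by
    funext ij
    have : (ij.1 : ι) ≠ ij.2 := fun h => ij.1.2 (h ▸ ij.2.2)
    simp [f, G, hK0, hμ, this]
  obtain ⟨ψ, hψ, hψ0, hψf, -⟩ := hf.exists_implicit L hL
  let K : ℝ → Matrix ι ι ℝ := fun t => skewOfBlock p (ψ t)
  have hK : AnalyticAt ℝ K t₀ := (analyticAt_skewOfBlock p _).comp hψ
  have hKt₀ : K t₀ = 0 := by simp [K, hψ0, hK0]
  let M : ℝ → Matrix ι ι ℝ := fun t => 1 - K t * K t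
  have hM : AnalyticAt ℝ M t₀ := analyticAt_const.sub (hK.matrix_mul hK)
  have hMdet : ∀ᶠ t in 𝓝 t₀, (M t).det ≠ 0 := by
    refine hM.matrix_det.continuousAt.eventually_ne ?_
    simp [M, hKt₀]
  refine ⟨fun t => (1 + K t) * (1 + K t) * (M t)⁻¹, ?_, ?_⟩
  · exact ((analyticAt_const.add hK).matrix_mul (analyticAt_const.add hK)).matrix_mul
      (hM.matrix_inv hMdet.self_of_nhds)
  filter_upwards [hsymm, hψf, hMdet] with t hs h0 hdet
  rw [hf0] at h0
  have hKT : (K t)ᵀ = -K t := skewOfBlock_transpose p _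
  have hKS : signMatrix p * K t = -(K t * signMatrix p) := signMatrix_mul_skewOfBlock p _
  have hMT : (M t)ᵀ = M t := by simp [M, hKT]
  have hMinvT : ((M t)⁻¹)ᵀ = (M t)⁻¹ := by rw [Matrix.transpose_nonsing_inv, hMT]
  have hu : IsUnit (M t).det := isUnit_iff_ne_zero.2 hdet
  have hMS : Commute (signMatrix p) (M t) := by
    have : Commute (signMatrix p) (K t * K t) := by
      rw [commute_iff_eq, ← mul_assoc, hKS, neg_mul, mul_assoc, hKS, mul_neg, neg_neg, mul_assoc]
    exact (Commute.one_right _).sub_right this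
  have hMinvS : Commute (signMatrix p) (M t)⁻¹ := by
    rw [commute_iff_eq]
    calc signMatrix p * (M t)⁻¹ = (M t)⁻¹ * (M t * signMatrix p) * (M t)⁻¹ := by
          rw [← mul_assoc, Matrix.nonsing_inv_mul _ hu, one_mul]
      _ = (M t)⁻¹ * signMatrix p := by
          rw [← hMS.eq, mul_assoc, mul_assoc, Matrix.mul_nonsing_inv _ hu, mul_one]
  constructor
  · have e1 : (1 - K t) * (1 - K t) * ((1 + K t) * (1 + K t)) = M t * M t := by
      simp only [M]; noncomm_ring
    calc _ = (M t)⁻¹ * ((1 - K t) * (1 - K t) * ((1 + K t) * (1 + K t))) * (M t)⁻¹ := by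
          simp only [Matrix.transpose_mul, hMinvT, Matrix.transpose_add, Matrix.transpose_one, hKT,
            ← sub_eq_add_neg, mul_assoc]
      _ = 1 := by
          rw [e1, ← mul_assoc, Matrix.nonsing_inv_mul _ hu, one_mul, Matrix.mul_nonsing_inv _ hu]
  · have hC : Commute (signMatrix p) ((G (ψ t))ᵀ * B t * G (ψ t)) := by
      rw [commute_signMatrix_iff]
      have hlow : ∀ i j, ¬p i → p j → ((G (ψ t))ᵀ * B t * G (ψ t)) i j = 0 := fun i j hi hj =>
        congrFun h0 (⟨i, hi⟩, ⟨j, hj⟩)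
      have hCs : ((G (ψ t))ᵀ * B t * G (ψ t))ᵀ = (G (ψ t))ᵀ * B t * G (ψ t) := by
        simp [hs, mul_assoc]
      intro i j hij
      by_cases hi : p i
      · rw [← hCs]
        exact hlow j i (fun hj => hij (iff_of_true hi hj)) hi
      · exact hlow i j hi (by_contra fun hj => hij (iff_of_false hi hj))
    have := (hMinvS.mul_right hC).mul_right hMinvS
    have e2 : ((1 + K t) * (1 + K t) * (M t)⁻¹)ᵀ * B t * ((1 + K t) * (1 + K t) * (M t)⁻¹) =
        (M t)⁻¹ * ((G (ψ t))ᵀ * B t * G (ψ t)) * (M t)⁻¹ := by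
      simp only [Matrix.transpose_mul, hMinvT, G, K, mul_assoc]
    rw [e2]
    exact this

/-- A matrix curve is analytically orthogonally diagonalizable near a point. -/
def AnalyticallyDiagonalizableAt {ι : Type*} [Fintype ι] [DecidableEq ι]
    (H : ℝ → Matrix ι ι ℝ) (t₀ : ℝ) : Prop :=
  ∃ U : ℝ → Matrix ι ι ℝ, AnalyticAt ℝ U t₀ ∧
    ∀ᶠ t in 𝓝 t₀, (U t)ᵀ * U t = 1 ∧ ((U t)ᵀ * H t * U t).IsDiag

namespace AnalyticallyDiagonalizableAt

variable {ι : Type*} [Fintype ι] [DecidableEq ι] {H B C V : ℝ → Matrix ι ι ℝ} {t₀ : ℝ}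

theorem of_conj (hV : AnalyticAt ℝ V t₀) (hV1 : ∀ᶠ t in 𝓝 t₀, (V t)ᵀ * V t = 1)
    (h : AnalyticallyDiagonalizableAt (fun t => (V t)ᵀ * H t * V t) t₀) :
    AnalyticallyDiagonalizableAt H t₀ := by
  obtain ⟨U, hU, hd⟩ := h
  refine ⟨fun t => V t * U t, hV.matrix_mul hU, ?_⟩
  filter_upwards [hV1, hd] with t h1 h2
  constructor
  · rw [Matrix.transpose_mul, mul_assoc, ← mul_assoc (V t)ᵀ, h1, one_mul, h2.1]
  · simpa only [Matrix.transpose_mul, mul_assoc] using h2.2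

theorem of_smul_add {c s : ℝ → ℝ}
    (h : AnalyticallyDiagonalizableAt B t₀) (hH : ∀ᶠ t in 𝓝 t₀, H t = c t • 1 + s t • B t) :
    AnalyticallyDiagonalizableAt H t₀ := by
  obtain ⟨U, hU, hd⟩ := h
  refine ⟨U, hU, ?_⟩
  filter_upwards [hH, hd] with t h1 h2
  refine ⟨h2.1, ?_⟩
  have : (U t)ᵀ * H t * U t = c t • 1 + s t • ((U t)ᵀ * B t * U t) := by
    rw [h1]
    simp only [Matrix.mul_add, Matrix.add_mul, Matrix.mul_smul, Matrix.smul_mul, mul_one, h2.1]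
  rw [this]
  exact (Matrix.isDiag_one.smul _).add (h2.2.smul _)

theorem of_blocks (p : ι → Prop) [DecidablePred p]
    (hC : ∀ᶠ t in 𝓝 t₀, Commute (signMatrix p) (C t))
    (h₁ : AnalyticallyDiagonalizableAt (fun t => (C t).toBlock p p) t₀)
    (h₂ : AnalyticallyDiagonalizableAt (fun t => (C t).toBlock (¬p ·) (¬p ·)) t₀) :
    AnalyticallyDiagonalizableAt C t₀ := by
  obtain ⟨U₁, hU₁, hd₁⟩ := h₁
  obtain ⟨U₂, hU₂, hd₂⟩ := h₂
  let e := Equiv.sumCompl p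
  have hblk : AnalyticAt ℝ (fun t => fromBlocks (U₁ t) 0 0 (U₂ t)) t₀ := by
    rw [analyticAt_matrix_iff] at *
    rintro (i | i) (j | j)
    · exact hU₁ i j
    · exact analyticAt_const
    · exact analyticAt_const
    · exact hU₂ i j
  refine ⟨fun t => (fromBlocks (U₁ t) 0 0 (U₂ t)).submatrix e.symm e.symm,
    hblk.matrix_submatrix _ _, ?_⟩
  filter_upwards [hC, hd₁, hd₂] with t hc h1 h2
  rw [commute_signMatrix_iff] at hc
  have hCe : C t = (fromBlocks ((C t).toBlock p p) 0 0
      ((C t).toBlock (¬p ·) (¬p ·))).submatrix e.symm e.symm := by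
    ext i j
    by_cases hi : p i <;> by_cases hj : p j <;>
      simp [e, Equiv.sumCompl_symm_apply_of_pos, Equiv.sumCompl_symm_apply_of_neg, hi, hj,
        Matrix.toBlock] <;>
      exact hc i j (by simp [hi, hj])
  constructor
  · rw [Matrix.transpose_submatrix, Matrix.submatrix_mul_equiv, fromBlocks_transpose,
      fromBlocks_multiply]
    simp [h1.1, h2.1]
  · rw [hCe, Matrix.transpose_submatrix, Matrix.submatrix_mul_equiv, Matrix.submatrix_mul_equiv,
      fromBlocks_transpose, fromBlocks_multiply, fromBlocks_multiply]
    refine Matrix.IsDiag.submatrix ?_ e.symm.injective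
    simpa using Matrix.IsDiag.fromBlocks h1.2 h2.2

end AnalyticallyDiagonalizableAt

theorem exists_orthogonal_diagonalization_s7 {ι : Type*} [Fintype ι] [DecidableEq ι]
    {A : Matrix ι ι ℝ} (hA : Aᵀ = A) :
    ∃ (S : Matrix ι ι ℝ) (μ : ι → ℝ), Sᵀ * S = 1 ∧ Sᵀ * A * S = diagonal μ := by
  have hH : A.IsHermitian := by rw [Matrix.IsHermitian, conjTranspose_eq_transpose_of_trivial, hA]
  have h1 : (hH.eigenvectorUnitary : Matrix ι ι ℝ)ᵀ * (hH.eigenvectorUnitary : Matrix ι ι ℝ) = 1 := by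
    have := (Matrix.mem_unitaryGroup_iff').1 hH.eigenvectorUnitary.2
    rwa [star_eq_conjTranspose, conjTranspose_eq_transpose_of_trivial] at this
  have h2 := hH.spectral_theorem
  rw [Unitary.conjStarAlgAut_apply, star_eq_conjTranspose,
    conjTranspose_eq_transpose_of_trivial] at h2
  refine ⟨hH.eigenvectorUnitary, hH.eigenvalues, h1, ?_⟩
  generalize (hH.eigenvectorUnitary : Matrix ι ι ℝ) = S at h1 h2
  calc Sᵀ * A * S = (Sᵀ * S) * diagonal hH.eigenvalues * (Sᵀ * S) := by
        rw [congrArg (fun M => Sᵀ * M * S) h2]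
        simp only [mul_assoc]
        rfl
    _ = diagonal hH.eigenvalues := by rw [h1, one_mul, mul_one]

/-- Rellich's theorem: an analytic curve of symmetric matrices is locally analytically orthogonally
diagonalizable. -/
theorem AnalyticAt.analyticallyDiagonalizableAt {ι : Type*} [Fintype ι] [DecidableEq ι]
    {H : ℝ → Matrix ι ι ℝ} {t₀ : ℝ} (hH : AnalyticAt ℝ H t₀)
    (hsymm : ∀ᶠ t in 𝓝 t₀, (H t)ᵀ = H t) : AnalyticallyDiagonalizableAt H t₀ := by
  induction hn : Fintype.card ι using Nat.strong_induction_on generalizing ι with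
  | _ n ih =>
  rcases isEmpty_or_nonempty ι with hι | hι
  · refine ⟨fun _ => 1, analyticAt_const, Eventually.of_forall fun t => ⟨?_, ?_⟩⟩
    · exact Subsingleton.elim _ _
    · exact fun i => hι.elim i
  have hcard : (Fintype.card ι : ℝ) ≠ 0 := by exact_mod_cast Fintype.card_ne_zero
  let c : ℝ → ℝ := fun t => (H t).trace / Fintype.card ι
  have hc : AnalyticAt ℝ c t₀ := hH.matrix_trace.div analyticAt_const hcard
  have hc1 : AnalyticAt ℝ (fun t => c t • (1 : Matrix ι ι ℝ)) t₀ := hc.smul analyticAt_const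
  by_cases h0 : ∀ᶠ t in 𝓝 t₀, H t - c t • 1 = 0
  · refine AnalyticallyDiagonalizableAt.of_smul_add (B := 0) (c := c) (s := 0)
      ⟨fun _ => 1, analyticAt_const, Eventually.of_forall fun t => ⟨by simp, by simp⟩⟩ ?_
    filter_upwards [h0] with t ht
    simpa using sub_eq_zero.1 ht
  obtain ⟨m, B, hB, hB0, hHB⟩ :=
    ((hH.sub hc1).exists_eventuallyEq_pow_smul_nonzero_iff).2 h0
  have hpunct : ∀ᶠ t in 𝓝[≠] t₀, (B t)ᵀ = B t ∧ (B t).trace = 0 := by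
    filter_upwards [eventually_nhdsWithin_of_eventually_nhds hsymm,
      eventually_nhdsWithin_of_eventually_nhds hHB, self_mem_nhdsWithin] with t h1 h2 h3
    have hne : (t - t₀) ^ m ≠ 0 := pow_ne_zero _ (sub_ne_zero.2 h3)
    have hBt : B t = ((t - t₀) ^ m)⁻¹ • (H t - c t • 1) := by
      rw [eq_inv_smul_iff₀ hne, ← h2]; rfl
    rw [hBt]
    constructor
    · simp [h1]
    · simp [c, hcard]
  have hBs : ∀ᶠ t in 𝓝 t₀, (B t)ᵀ = B t :=
    (hB.matrix_transpose.continuousAt.eventuallyEq_nhds_iff_eventuallyEq_nhdsNE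
      hB.continuousAt).1 (hpunct.mono fun _ h => h.1)
  have hBtr : (B t₀).trace = 0 :=
    ((hB.matrix_trace.continuousAt.eventuallyEq_nhds_iff_eventuallyEq_nhdsNE
      (continuousAt_const (y := (0 : ℝ)))).1 (hpunct.mono fun _ h => h.2)).self_of_nhds
  refine AnalyticallyDiagonalizableAt.of_smul_add (B := B) (c := c) (s := fun t => (t - t₀) ^ m) ?_
    (hHB.mono fun t ht => by rw [← ht]; simp)
  obtain ⟨S, μ, hS, hμ⟩ := exists_orthogonal_diagonalization_s7 hBs.self_of_nhds
  refine AnalyticallyDiagonalizableAt.of_conj (V := fun _ => S) analyticAt_const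
    (Eventually.of_forall fun _ => hS) ?_
  have hB' : AnalyticAt ℝ (fun t => Sᵀ * B t * S) t₀ :=
    (analyticAt_const.matrix_mul hB).matrix_mul analyticAt_const
  have hB's : ∀ᶠ t in 𝓝 t₀, (Sᵀ * B t * S)ᵀ = Sᵀ * B t * S := by
    filter_upwards [hBs] with t ht
    simp [ht, mul_assoc]
  have hS' : S * Sᵀ = 1 := mul_eq_one_comm.1 hS
  obtain ⟨i₀⟩ := hι
  let p : ι → Prop := fun i => μ i = μ i₀
  classical
  obtain ⟨j₀, hj₀⟩ : ∃ j, ¬p j := by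
    by_contra! hall
    have hμ' : Sᵀ * B t₀ * S = μ i₀ • 1 := by
      rw [hμ, Matrix.smul_one_eq_diagonal]
      exact congrArg diagonal (funext hall)
    have hBt₀ : B t₀ = μ i₀ • 1 := by
      calc B t₀ = (S * Sᵀ) * B t₀ * (S * Sᵀ) := by rw [hS', one_mul, mul_one]
        _ = S * (Sᵀ * B t₀ * S) * Sᵀ := by simp only [mul_assoc]
        _ = μ i₀ • 1 := by rw [hμ', Matrix.mul_smul, Matrix.smul_mul, mul_one, hS']
    rw [hBt₀] at hBtr hB0
    simp only [trace_smul, trace_one, smul_eq_mul, mul_eq_zero, hcard, or_false] at hBtr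
    simp [hBtr] at hB0
  obtain ⟨U, hU, hUd⟩ := exists_analytic_block_splitting p hB' hB's hμ
    (fun i j hi hj h => hi (h.trans hj))
  refine AnalyticallyDiagonalizableAt.of_conj hU (hUd.mono fun _ h => h.1) ?_
  have hC : AnalyticAt ℝ (fun t => (U t)ᵀ * (Sᵀ * B t * S) * U t) t₀ :=
    (hU.matrix_transpose.matrix_mul hB').matrix_mul hU
  have hCs : ∀ᶠ t in 𝓝 t₀, ((U t)ᵀ * (Sᵀ * B t * S) * U t)ᵀ = (U t)ᵀ * (Sᵀ * B t * S) * U t := by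
    filter_upwards [hBs] with t ht
    simp [ht, mul_assoc]
  refine AnalyticallyDiagonalizableAt.of_blocks p (hUd.mono fun _ h => h.2) ?_ ?_
  · refine ih _ ?_ (hC.matrix_submatrix _ _) (hCs.mono fun t ht => ?_) rfl
    · exact hn ▸ Fintype.card_subtype_lt hj₀
    · exact (congrArg (fun M => M.toBlock p p) ht :)
  · refine ih _ ?_ (hC.matrix_submatrix _ _) (hCs.mono fun t ht => ?_) rfl
    · exact hn ▸ Fintype.card_subtype_lt (x := i₀) (by simp [p])
    · exact (congrArg (fun M => M.toBlock (¬p ·) (¬p ·)) ht :)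

theorem AnalyticAt.eventually_eq_or_eventually_ne_real {f g : ℝ → ℝ} {t₀ : ℝ}
    (hf : AnalyticAt ℝ f t₀) (hg : AnalyticAt ℝ g t₀) :
    (∀ᶠ t in 𝓝 t₀, f t = g t) ∨ ∀ᶠ t in 𝓝[≠] t₀, f t ≠ g t := by
  rcases (hf.sub hg).eventually_eq_zero_or_eventually_ne_zero with h | h
  · exact Or.inl (h.mono fun t ht => sub_eq_zero.1 ht)
  · exact Or.inr (h.mono fun t ht => sub_ne_zero.1 ht)

/-- A local analytic orthonormal eigenframe, with its connection matrix. -/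
theorem AnalyticAt.exists_eigenframe {ι : Type*} [Fintype ι] [DecidableEq ι]
    {H : ℝ → Matrix ι ι ℝ} {t₀ : ℝ} (hH : AnalyticAt ℝ H t₀)
    (hsymm : ∀ᶠ t in 𝓝 t₀, (H t)ᵀ = H t) :
    ∃ (U K : ℝ → Matrix ι ι ℝ) (d : ℝ → ι → ℝ), AnalyticAt ℝ U t₀ ∧ AnalyticAt ℝ K t₀ ∧
      (∀ i, AnalyticAt ℝ (fun t => d t i) t₀) ∧
      ∀ᶠ t in 𝓝 t₀, (U t)ᵀ * U t = 1 ∧ (K t)ᵀ = -K t ∧ HasDerivAt U (U t * K t) t ∧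
        H t = U t * diagonal (d t) * (U t)ᵀ ∧
        ∃ d' : ι → ℝ, HasDerivAt H (U t * (diagonal d' +
          (K t * diagonal (d t) - diagonal (d t) * K t)) * (U t)ᵀ) t := by
  obtain ⟨U, hU, hUd⟩ := hH.analyticallyDiagonalizableAt hsymm
  have hK : AnalyticAt ℝ (fun t => (U t)ᵀ * deriv U t) t₀ :=
    hU.matrix_transpose.matrix_mul hU.deriv
  have hD : AnalyticAt ℝ (fun t => (U t)ᵀ * H t * U t) t₀ :=
    (hU.matrix_transpose.matrix_mul hH).matrix_mul hU
  have hDi : ∀ i, AnalyticAt ℝ (fun t => ((U t)ᵀ * H t * U t) i i) t₀ :=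
    fun i => analyticAt_matrix_iff.1 hD i i
  have hKd : ∀ᶠ t in 𝓝 t₀, ((U t)ᵀ * deriv U t)ᵀ = -((U t)ᵀ * deriv U t) ∧
      HasDerivAt U (U t * ((U t)ᵀ * deriv U t)) t := by
    filter_upwards [hUd.eventually_nhds, hU.eventually_analyticAt] with t h1 h2
    have hd : HasDerivAt U (deriv U t) t := h2.differentiableAt.hasDerivAt
    have hu : (U t)ᵀ * U t = 1 := h1.self_of_nhds.1
    have h3 : (deriv U t)ᵀ * U t + (U t)ᵀ * deriv U t = 0 := by
      refine (hd.matrix_transpose.matrix_mul hd).unique ?_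
      exact (hasDerivAt_const t (1 : Matrix ι ι ℝ)).congr_of_eventuallyEq (h1.mono fun s hs => hs.1)
    refine ⟨?_, ?_⟩
    · rw [Matrix.transpose_mul, Matrix.transpose_transpose]
      exact eq_neg_of_add_eq_zero_left h3
    · rw [← mul_assoc, mul_eq_one_comm.1 hu, one_mul]
      exact hd
  have hHD : ∀ᶠ t in 𝓝 t₀,
      H t = U t * diagonal (fun i => ((U t)ᵀ * H t * U t) i i) * (U t)ᵀ := by
    filter_upwards [hUd] with t h1
    have hu : U t * (U t)ᵀ = 1 := mul_eq_one_comm.1 h1.1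
    have : diagonal (fun i => ((U t)ᵀ * H t * U t) i i) = (U t)ᵀ * H t * U t :=
      h1.2.diagonal_diag
    calc H t = (U t * (U t)ᵀ) * H t * (U t * (U t)ᵀ) := by rw [hu, one_mul, mul_one]
      _ = _ := by rw [this]; simp only [mul_assoc]
  refine ⟨U, fun t => (U t)ᵀ * deriv U t, fun t i => ((U t)ᵀ * H t * U t) i i, hU, hK, hDi, ?_⟩
  filter_upwards [hUd, hKd, hHD.eventually_nhds,
    eventually_all.2 fun i => (hDi i).eventually_analyticAt] with t h1 h2 h3 h4
  refine ⟨h1.1, h2.1, h2.2, h3.self_of_nhds,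
    fun i => deriv (fun t => ((U t)ᵀ * H t * U t) i i) t, ?_⟩
  have hdiag : HasDerivAt (fun t => diagonal (fun i => ((U t)ᵀ * H t * U t) i i))
      (diagonal fun i => deriv (fun t => ((U t)ᵀ * H t * U t) i i) t) t := by
    rw [hasDerivAt_matrix_iff]
    intro i j
    by_cases hij : i = j
    · subst hij
      simpa only [diagonal_apply_eq] using (h4 i).differentiableAt.hasDerivAt
    · simpa only [diagonal_apply_ne _ hij] using hasDerivAt_const t (0 : ℝ)
  refine (((h2.2.matrix_mul hdiag).matrix_mul h2.2.matrix_transpose).congr_of_eventuallyEq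
    h3).congr_deriv ?_
  rw [Matrix.transpose_mul, h2.1]
  noncomm_ring

/-- `X` is the minimal skew connection matrix rotating the eigenspaces of `H` along `H'`: it lies in
the range of `ad H` and `H' - [X, H]` commutes with `H`. -/
def IsEigenConnection {ι : Type*} [Fintype ι] (H H' X : Matrix ι ι ℝ) : Prop :=
  (∃ Y, X = H * Y - Y * H) ∧ Commute (H' - (X * H - H * X)) H

namespace IsEigenConnection

variable {ι : Type*} [Fintype ι] {H H' X X' : Matrix ι ι ℝ}

theorem _root_.Matrix.commutator_eq_zero_of_double_commutator (hH : Hᵀ = H)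
    (h : H * (H * X - X * H) - (H * X - X * H) * H = 0) : H * X - X * H = 0 := by
  have h1 : ((H * X - X * H)ᵀ * (H * X - X * H)).trace = 0 := by
    have h2 : (Xᵀ * (H * (H * X - X * H) - (H * X - X * H) * H)).trace = 0 := by
      rw [h, mul_zero, trace_zero]
    rw [← h2, Matrix.mul_sub Xᵀ, trace_sub, ← Matrix.mul_assoc Xᵀ _ H,
      trace_mul_comm (Xᵀ * (H * X - X * H)) H, Matrix.transpose_sub, Matrix.transpose_mul,
      Matrix.transpose_mul, hH, Matrix.sub_mul, trace_sub]
    simp only [Matrix.mul_assoc]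
  rwa [← conjTranspose_eq_transpose_of_trivial, trace_conjTranspose_mul_self_eq_zero_iff] at h1

theorem unique (hH : Hᵀ = H) (hX : IsEigenConnection H H' X) (hX' : IsEigenConnection H H' X') :
    X = X' := by
  obtain ⟨⟨Y, rfl⟩, h⟩ := hX
  obtain ⟨⟨Y', rfl⟩, h'⟩ := hX'
  have h3 : Commute H (H * (H * (Y - Y') - (Y - Y') * H) - (H * (Y - Y') - (Y - Y') * H) * H) := by
    have := (h.sub_left h').symm
    rw [commute_iff_eq, ← sub_eq_zero] at this ⊢
    rw [← this]
    simp only [Matrix.mul_sub, Matrix.sub_mul, Matrix.mul_assoc]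
    abel
  have h4 := commutator_eq_zero_of_double_commutator hH (sub_eq_zero.2 h3.eq)
  have h5 := commutator_eq_zero_of_double_commutator hH h4
  rw [← sub_eq_zero, ← h5, Matrix.mul_sub, Matrix.sub_mul]
  abel

theorem transpose_eq_neg (hH : Hᵀ = H) (hH' : H'ᵀ = H') (hX : IsEigenConnection H H' X) :
    Xᵀ = -X := by
  suffices IsEigenConnection H H' (-Xᵀ) from neg_eq_iff_eq_neg.1 (hX.unique hH this).symm
  obtain ⟨⟨Y, hY⟩, h⟩ := hX
  refine ⟨⟨Yᵀ, ?_⟩, ?_⟩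
  · rw [hY, Matrix.transpose_sub, Matrix.transpose_mul, Matrix.transpose_mul, hH, neg_sub]
  · rw [commute_iff_eq] at h ⊢
    have := congrArg Matrix.transpose h
    simp only [Matrix.transpose_mul, Matrix.transpose_sub, hH, hH'] at this
    rw [← sub_eq_zero] at this ⊢
    rw [← neg_eq_zero, ← this]
    simp only [Matrix.mul_sub, Matrix.sub_mul, Matrix.mul_assoc, Matrix.mul_neg, Matrix.neg_mul]
    abel

theorem commute_of_anticommute [DecidableEq ι] {J : Matrix ι ι ℝ} (hJ : J * J = 1) (hJH : J * H = -(H * J))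
    (hJH' : J * H' = -(H' * J)) (hH : Hᵀ = H) (hX : IsEigenConnection H H' X) : Commute J X := by
  suffices IsEigenConnection H H' (J * X * J) by
    rw [commute_iff_eq]
    nth_rw 2 [hX.unique hH this]
    rw [mul_assoc, hJ, mul_one]
  have e : ∀ M N : Matrix ι ι ℝ, J * (M * N) * J = (J * M * J) * (J * N * J) := fun M N => by
    calc J * (M * N) * J = J * M * 1 * N * J := by rw [mul_one, ← mul_assoc J]
      _ = _ := by rw [← hJ]; simp only [mul_assoc]
  have eH : J * H * J = -H := by rw [hJH, neg_mul, mul_assoc, hJ, mul_one]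
  have eH' : J * H' * J = -H' := by rw [hJH', neg_mul, mul_assoc, hJ, mul_one]
  obtain ⟨⟨Y, hY⟩, h⟩ := hX
  refine ⟨⟨-(J * Y * J), ?_⟩, ?_⟩
  · rw [hY, mul_sub, sub_mul, e, e, eH]
    noncomm_ring
  · have := congrArg (fun M => J * M * J) h.eq
    simp only [e, eH, eH', mul_sub, sub_mul] at this
    rw [commute_iff_eq, ← sub_eq_zero]
    rw [← sub_eq_zero] at this
    rw [← this]
    noncomm_ring

end IsEigenConnection

theorem AnalyticAt.exists_isEigenConnection {ι : Type*} [Fintype ι] [DecidableEq ι]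
    {H : ℝ → Matrix ι ι ℝ} {t₀ : ℝ} (hH : AnalyticAt ℝ H t₀)
    (hsymm : ∀ᶠ t in 𝓝 t₀, (H t)ᵀ = H t) :
    ∃ X : ℝ → Matrix ι ι ℝ, AnalyticAt ℝ X t₀ ∧
      ∀ᶠ t in 𝓝[≠] t₀, IsEigenConnection (H t) (deriv H t) (X t) := by
  obtain ⟨U, K, d, hU, hK, hd, h⟩ := hH.exists_eigenframe hsymm
  classical
  let E : ι → ι → Prop := fun r s => ∀ᶠ t in 𝓝 t₀, d t r = d t s
  let L : ℝ → Matrix ι ι ℝ := fun t => of fun r s => if E r s then 0 else K t r s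
  have hL : AnalyticAt ℝ L t₀ := by
    rw [analyticAt_matrix_iff] at hK ⊢
    intro r s
    by_cases hrs : E r s
    · simpa [L, hrs] using analyticAt_const
    · simpa [L, hrs] using hK r s
  refine ⟨fun t => U t * L t * (U t)ᵀ, (hU.matrix_mul hL).matrix_mul hU.matrix_transpose, ?_⟩
  have hE : ∀ᶠ t in 𝓝[≠] t₀, ∀ r s, (E r s ∧ d t r = d t s) ∨ (¬E r s ∧ d t r ≠ d t s) := by
    refine eventually_all.2 fun r => eventually_all.2 fun s => ?_
    by_cases hrs : E r s
    · filter_upwards [eventually_nhdsWithin_of_eventually_nhds hrs] with t ht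
      exact Or.inl ⟨hrs, ht⟩
    · filter_upwards [((hd r).eventually_eq_or_eventually_ne_real (hd s)).resolve_left hrs] with t ht
      exact Or.inr ⟨hrs, ht⟩
  filter_upwards [eventually_nhdsWithin_of_eventually_nhds h, hE] with t ⟨hu, _, _, hHt, d', hH'⟩ hEt
  have e : ∀ M N : Matrix ι ι ℝ, (U t * M * (U t)ᵀ) * (U t * N * (U t)ᵀ) =
      U t * (M * N) * (U t)ᵀ := fun M N => by
    calc _ = U t * M * ((U t)ᵀ * U t) * N * (U t)ᵀ := by simp only [mul_assoc]
      _ = _ := by rw [hu, mul_one]; simp only [mul_assoc]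
  refine ⟨⟨U t * (of fun r s => L t r s / (d t r - d t s)) * (U t)ᵀ, ?_⟩, ?_⟩
  · rw [hHt, e, e, ← sub_mul, ← mul_sub]
    congr 2
    ext r s
    simp only [Matrix.sub_apply, diagonal_mul, mul_diagonal, of_apply]
    rcases hEt r s with ⟨h1, h2⟩ | ⟨h1, h2⟩
    · simp [L, h1]
    · have := sub_ne_zero.2 h2
      field_simp
  · have : deriv H t - (U t * L t * (U t)ᵀ * H t - H t * (U t * L t * (U t)ᵀ)) =
        U t * diagonal d' * (U t)ᵀ := by
      rw [show deriv H t = _ from hH'.deriv, hHt, e, e, ← sub_mul, ← mul_sub, ← sub_mul, ← mul_sub]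
      congr 2
      ext r s
      simp only [Matrix.sub_apply, Matrix.add_apply, diagonal_mul, mul_diagonal]
      rcases hEt r s with ⟨h1, h2⟩ | ⟨h1, h2⟩
      · simp [L, h1, h2, mul_comm]
      · simp [L, h1]
    rw [this, hHt, commute_iff_eq, e, e, diagonal_mul_diagonal, diagonal_mul_diagonal]
    simp only [mul_comm]

/-- Local analytic solutions of a pointwise condition with unique solutions glue. -/
theorem exists_analyticOnNhd_of_local {E : Type*} [NormedAddCommGroup E] [NormedSpace ℝ E]
    [CompleteSpace E] {I : Set ℝ} {P : ℝ → E → Prop}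
    (huniq : ∀ t ∈ I, ∀ x y, P t x → P t y → x = y) (hI : IsOpen I)
    (hloc : ∀ t₀ ∈ I, ∃ X : ℝ → E, AnalyticAt ℝ X t₀ ∧ ∀ᶠ t in 𝓝[≠] t₀, P t (X t)) :
    ∃ X : ℝ → E, AnalyticOnNhd ℝ X I ∧ ∀ t₀ ∈ I, ∀ᶠ t in 𝓝[≠] t₀, P t (X t) := by
  classical
  choose! Y hY hP using hloc
  have key : ∀ t₀ ∈ I, ∀ᶠ t in 𝓝 t₀, Y t t = Y t₀ t := by
    intro t₀ ht₀
    have h1 : ∀ᶠ t in 𝓝[≠] t₀, ∀ᶠ s in 𝓝[≠] t, P s (Y t₀ s) := by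
      filter_upwards [eventually_eventually_nhdsWithin.2 (hP t₀ ht₀), self_mem_nhdsWithin]
        with t ht htne
      rw [isOpen_compl_singleton.nhdsWithin_eq htne] at ht
      exact eventually_nhdsWithin_of_eventually_nhds ht
    rw [← nhdsNE_sup_pure, eventually_sup]
    refine ⟨?_, by simp⟩
    filter_upwards [h1, eventually_nhdsWithin_of_eventually_nhds (hY t₀ ht₀).eventually_analyticAt,
      eventually_nhdsWithin_of_eventually_nhds (hI.mem_nhds ht₀)] with t ht hta htI
    refine (((hY t htI).continuousAt.eventuallyEq_nhds_iff_eventuallyEq_nhdsNE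
      hta.continuousAt).1 ?_).self_of_nhds
    filter_upwards [ht, hP t htI, eventually_nhdsWithin_of_eventually_nhds (hI.mem_nhds htI)]
      with s h1 h2 h3
    exact huniq s h3 _ _ h2 h1
  refine ⟨fun t => Y t t, fun t₀ ht₀ => (hY t₀ ht₀).congr ((key t₀ ht₀).mono fun t ht => ht.symm),
    fun t₀ ht₀ => ?_⟩
  filter_upwards [eventually_nhdsWithin_of_eventually_nhds (key t₀ ht₀), hP t₀ ht₀] with t h1 h2
  rwa [h1]

theorem exists_analytic_eigenConnection {ι : Type*} [Fintype ι] [DecidableEq ι] {I : Set ℝ}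
    {H : ℝ → Matrix ι ι ℝ} (hI : IsOpen I) (hH : AnalyticOnNhd ℝ H I)
    (hsymm : ∀ t ∈ I, (H t)ᵀ = H t) :
    ∃ Ω : ℝ → Matrix ι ι ℝ, AnalyticOnNhd ℝ Ω I ∧ (∀ t ∈ I, (Ω t)ᵀ = -Ω t) ∧
      (∀ t ∈ I, Commute (deriv H t - (Ω t * H t - H t * Ω t)) (H t)) ∧
      ∀ J : Matrix ι ι ℝ, J * J = 1 → (∀ t ∈ I, J * H t = -(H t * J)) →
        ∀ t ∈ I, Commute J (Ω t) := by
  have hev : ∀ t ∈ I, ∀ᶠ s in 𝓝 t, s ∈ I := fun t ht => hI.mem_nhds ht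
  obtain ⟨Ω, hΩ, hP⟩ := exists_analyticOnNhd_of_local
    (P := fun t X => IsEigenConnection (H t) (deriv H t) X)
    (fun t ht X Y hX hY => hX.unique (hsymm t ht) hY) hI
    fun t₀ ht₀ => (hH t₀ ht₀).exists_isEigenConnection ((hev t₀ ht₀).mono hsymm)
  have hd : ∀ {f : Matrix ι ι ℝ →L[ℝ] Matrix ι ι ℝ} {t : ℝ}, t ∈ I →
      (∀ s ∈ I, f (H s) = 0) → f (deriv H t) = 0 := fun {f t} ht hf => by
    have h1 := f.hasFDerivAt.comp_hasDerivAt t (hH t ht).differentiableAt.hasDerivAt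
    exact h1.unique ((hasDerivAt_const t 0).congr_of_eventuallyEq ((hev t ht).mono hf))
  have hd1 : ∀ t ∈ I, (deriv H t)ᵀ = deriv H t := fun t ht => by
    have := hd (f := LinearMap.toContinuousLinearMap
      ((Matrix.transposeLinearEquiv ι ι ℝ ℝ).toLinearMap - LinearMap.id)) ht
      (fun s hs => sub_eq_zero.2 (hsymm s hs))
    exact sub_eq_zero.1 this
  have hcont : ∀ {f g : ℝ → Matrix ι ι ℝ} {t : ℝ}, AnalyticAt ℝ f t → AnalyticAt ℝ g t →
      (∀ᶠ s in 𝓝[≠] t, f s = g s) → f t = g t := fun hf hg h =>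
    ((hf.continuousAt.eventuallyEq_nhds_iff_eventuallyEq_nhdsNE
      hg.continuousAt).1 h).self_of_nhds
  refine ⟨Ω, hΩ, fun t ht => ?_, fun t ht => ?_, fun J hJ hJH t ht => ?_⟩
  · refine hcont (hΩ t ht).matrix_transpose (hΩ t ht).neg ?_
    filter_upwards [hP t ht, eventually_nhdsWithin_of_eventually_nhds (hev t ht)] with s h1 h2
    exact h1.transpose_eq_neg (hsymm s h2) (hd1 s h2)
  · have hG := (hH t ht).deriv.sub (((hΩ t ht).matrix_mul (hH t ht)).sub
      ((hH t ht).matrix_mul (hΩ t ht)))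
    exact hcont (hG.matrix_mul (hH t ht)) ((hH t ht).matrix_mul hG) ((hP t ht).mono fun s h => h.2.eq)
  · refine hcont (analyticAt_const.matrix_mul (hΩ t ht)) ((hΩ t ht).matrix_mul analyticAt_const) ?_
    filter_upwards [hP t ht, eventually_nhdsWithin_of_eventually_nhds (hev t ht)] with s h1 h2
    refine (h1.commute_of_anticommute hJ (hJH s h2) ?_ (hsymm s h2)).eq
    have := hd (f := LinearMap.toContinuousLinearMap
      (LinearMap.mulLeft ℝ J + LinearMap.mulRight ℝ J)) h2
      (fun r hr => by
        show J * H r + H r * J = 0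
        rw [hJH r hr, neg_add_cancel])
    exact eq_neg_of_add_eq_zero_left this

theorem eq_of_hasDerivAt_zero {E : Type*} [NormedAddCommGroup E] [NormedSpace ℝ E] {S : Set ℝ}
    (hS : IsOpen S) (hS' : S.OrdConnected) {f : ℝ → E} (hf : ∀ t ∈ S, HasDerivAt f 0 t) {s t : ℝ}
    (hs : s ∈ S) (ht : t ∈ S) : f s = f t :=
  hS.is_const_of_deriv_eq_zero hS'.isPreconnected
    (fun r hr => (hf r hr).differentiableAt.differentiableWithinAt) (fun r hr => (hf r hr).deriv)
    hs ht

/-- The radial truncation to the unit ball is Lipschitz. -/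
theorem lipschitzWith_inv_max_one_norm_smul {E : Type*} [NormedAddCommGroup E] [NormedSpace ℝ E] :
    LipschitzWith 2 fun x : E => (max 1 ‖x‖)⁻¹ • x := by
  refine LipschitzWith.of_dist_le_mul fun x y => ?_
  rw [dist_eq_norm, dist_eq_norm, NNReal.coe_ofNat]
  have hx : 1 ≤ max 1 ‖x‖ := le_max_left _ _
  have hy : 1 ≤ max 1 ‖y‖ := le_max_left _ _
  have hyy : ‖y‖ ≤ max 1 ‖y‖ := le_max_right _ _
  have hxy : |max 1 ‖y‖ - max 1 ‖x‖| ≤ ‖x - y‖ := by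
    rw [max_comm 1, max_comm 1]
    exact (abs_max_sub_max_le_abs _ _ _).trans (norm_sub_rev x y ▸ abs_norm_sub_norm_le y x)
  generalize max 1 ‖x‖ = a at *
  generalize max 1 ‖y‖ = b at *
  have ha0 : 0 < a := by linarith
  have hb0 : 0 < b := by linarith
  have e : a⁻¹ • x - b⁻¹ • y = a⁻¹ • (x - y) + ((b - a) * (a⁻¹ * b⁻¹)) • y := by
    have : (b - a) * (a⁻¹ * b⁻¹) = a⁻¹ - b⁻¹ := by field_simp
    rw [this]
    module
  rw [e]
  refine (norm_add_le _ _).trans ?_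
  rw [norm_smul, norm_smul, norm_mul, Real.norm_eq_abs, Real.norm_eq_abs,
    Real.norm_eq_abs, abs_of_pos (by positivity : 0 < a⁻¹),
    abs_of_pos (by positivity : 0 < a⁻¹ * b⁻¹)]
  have h1 : a⁻¹ ≤ 1 := inv_le_one_of_one_le₀ hx
  have h2 : b⁻¹ * ‖y‖ ≤ 1 := by
    rw [inv_mul_le_iff₀ hb0, mul_one]; exact hyy
  have h3 : |b - a| * (a⁻¹ * b⁻¹) * ‖y‖ ≤ ‖x - y‖ * (1 * 1) := by
    rw [mul_assoc, mul_assoc a⁻¹]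
    gcongr
  have h4 : a⁻¹ * ‖x - y‖ ≤ 1 * ‖x - y‖ := by gcongr
  linarith

theorem norm_le_one_of_transpose_mul_self {ι : Type*} [Fintype ι] [DecidableEq ι]
    {X : Matrix ι ι ℝ} (h : Xᵀ * X = 1) : ‖X‖ ≤ 1 := by
  rw [Matrix.norm_le_iff zero_le_one]
  intro i j
  have h1 : ∑ k, X k j * X k j = 1 := by
    have := congrFun (congrFun h j) j
    simpa [Matrix.mul_apply] using this
  have h2 : X i j * X i j ≤ 1 := by
    rw [← h1]
    exact Finset.single_le_sum (f := fun k => X k j * X k j) (fun k _ => mul_self_nonneg _)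
      (Finset.mem_univ i)
  rw [Real.norm_eq_abs, abs_le]
  constructor <;> nlinarith

theorem HasDerivAt.transpose_mul_of_skew {ι : Type*} [Fintype ι] {Q R : ℝ → Matrix ι ι ℝ}
    {A M : Matrix ι ι ℝ} {t : ℝ} {c : ℝ} (hA : Aᵀ = -A) (hM : Commute M A)
    (hQ : HasDerivAt Q (c • (A * Q t)) t) (hR : HasDerivAt R (c • (A * R t)) t) :
    HasDerivAt (fun s => (Q s)ᵀ * M * R s) 0 t := by
  refine ((hQ.matrix_transpose.matrix_mul (hasDerivAt_const t M)).matrix_mul hR).congr_deriv ?_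
  rw [Matrix.transpose_smul, Matrix.transpose_mul, hA]
  have : (Q t)ᵀ * M * (A * R t) = (Q t)ᵀ * (A * M) * R t := by
    rw [← hM.eq]; simp only [Matrix.mul_assoc]
  simp only [Matrix.mul_smul, this]
  simp [Matrix.mul_assoc]

theorem exists_truncated_linear_flow {E F : Type*} [NormedAddCommGroup E] [NormedSpace ℝ E]
    [CompleteSpace E] [NormedAddCommGroup F] [NormedSpace ℝ F] (T : F →L[ℝ] E →L[ℝ] E) {A : ℝ → F}
    {a b t₀ : ℝ} (ht₀ : t₀ ∈ Set.Icc a b) (hA : ContinuousOn A (Set.Icc a b)) (x₀ : E) :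
    ∃ x : ℝ → E, x t₀ = x₀ ∧ ∀ t ∈ Set.Icc a b,
      HasDerivWithinAt x (T (A t) ((max 1 ‖x t‖)⁻¹ • x t)) (Set.Icc a b) t := by
  obtain ⟨C, hC⟩ := isCompact_Icc.exists_bound_of_continuousOn
    (T.continuous.comp_continuousOn hA)
  have hCC : ∀ t ∈ Set.Icc a b, ‖T (A t)‖ ≤ C.toNNReal := fun t ht =>
    (hC t ht).trans (Real.le_coe_toNNReal C)
  have hρ : ∀ x : E, ‖(max 1 ‖x‖)⁻¹ • x‖ ≤ 1 := fun x => by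
    rw [norm_smul, norm_inv, Real.norm_of_nonneg (by positivity),
      inv_mul_le_iff₀ (by positivity), mul_one]
    exact le_max_right _ _
  have hPL : IsPicardLindelof (fun t x => T (A t) ((max 1 ‖x‖)⁻¹ • x))
      (⟨t₀, ht₀⟩ : Set.Icc a b) x₀
      (C.toNNReal * (b - a).toNNReal) 0 C.toNNReal (C.toNNReal * 2) := by
    refine ⟨fun t ht => ?_, fun X _ => ?_, fun t ht X _ => ?_, ?_⟩
    · have h1 : LipschitzWith C.toNNReal (T (A t)) :=
        (T (A t)).lipschitz.weaken (hCC t ht)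
      exact (h1.comp lipschitzWith_inv_max_one_norm_smul).lipschitzOnWith
    · exact (T.continuous.comp_continuousOn hA).clm_apply continuousOn_const
    · refine ((T (A t)).le_opNorm _).trans ?_
      calc _ ≤ (C.toNNReal : ℝ) * 1 := by gcongr; exacts [hCC t ht, hρ X]
        _ = _ := mul_one _
    · have hab : 0 ≤ b - a := by linarith [ht₀.1, ht₀.2]
      rw [NNReal.coe_zero, sub_zero, NNReal.coe_mul, Real.coe_toNNReal _ hab]
      gcongr
      exact max_le (by linarith [ht₀.1]) (by linarith [ht₀.2])
  exact hPL.exists_eq_forall_mem_Icc_hasDerivWithinAt (Metric.mem_closedBall_self le_rfl)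

theorem exists_orthogonal_transport_Ioo {ι : Type*} [Fintype ι] [DecidableEq ι]
    {Ω : ℝ → Matrix ι ι ℝ} {a b t₀ : ℝ} (ht₀ : t₀ ∈ Set.Ioo a b)
    (hΩ : ContinuousOn Ω (Set.Icc a b)) (hskew : ∀ t ∈ Set.Icc a b, (Ω t)ᵀ = -Ω t) :
    ∃ Q : ℝ → Matrix ι ι ℝ, Q t₀ = 1 ∧ ∀ t ∈ Set.Ioo a b, HasDerivAt Q (Ω t * Q t) t := by
  let T : Matrix ι ι ℝ →L[ℝ] Matrix ι ι ℝ →L[ℝ] Matrix ι ι ℝ :=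
    LinearMap.toContinuousLinearMap
      (LinearMap.toContinuousLinearMap.toLinearMap ∘ₗ LinearMap.mul ℝ (Matrix ι ι ℝ))
  obtain ⟨Q, hQ0, hQ⟩ := exists_truncated_linear_flow (E := Matrix ι ι ℝ) T
    (Set.Ioo_subset_Icc_self ht₀) hΩ 1
  have hQ' : ∀ t ∈ Set.Ioo a b, HasDerivAt Q ((max 1 ‖Q t‖)⁻¹ • (Ω t * Q t)) t := fun t ht => by
    have := (hQ t (Set.Ioo_subset_Icc_self ht)).hasDerivAt (Icc_mem_nhds ht.1 ht.2)
    refine this.congr_deriv ?_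
    rw [map_smul]
    rfl
  refine ⟨Q, hQ0, fun t ht => (hQ' t ht).congr_deriv ?_⟩
  have h1 : (Q t)ᵀ * 1 * Q t = (Q t₀)ᵀ * 1 * Q t₀ :=
    eq_of_hasDerivAt_zero isOpen_Ioo Set.ordConnected_Ioo
      (fun s hs => (hQ' s hs).transpose_mul_of_skew (hskew s (Set.Ioo_subset_Icc_self hs))
        (Commute.one_left _) (hQ' s hs)) ht ht₀
  rw [hQ0] at h1
  have h2 := norm_le_one_of_transpose_mul_self (X := Q t) (by simpa using h1)
  rw [max_eq_left h2, inv_one, one_smul]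

theorem exists_Ioo_of_isOpen_ordConnected {I : Set ℝ} (hI : IsOpen I) (hI' : I.OrdConnected)
    {s t : ℝ} (hs : s ∈ I) (ht : t ∈ I) :
    ∃ a b, s ∈ Set.Ioo a b ∧ t ∈ Set.Ioo a b ∧ Set.Icc a b ⊆ I := by
  have key : ∀ r ∈ I, ∃ ε > 0, r - ε ∈ I ∧ r + ε ∈ I := fun r hr => by
    obtain ⟨ε, hε, h⟩ := Metric.isOpen_iff.1 hI r hr
    refine ⟨ε / 2, by positivity, h ?_, h ?_⟩ <;>
      simp [abs_of_pos hε] <;> linarith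
  obtain ⟨ε, hε, h1, h2⟩ := key s hs
  obtain ⟨δ, hδ, h3, h4⟩ := key t ht
  refine ⟨min (s - ε) (t - δ), max (s + ε) (t + δ), ⟨?_, ?_⟩, ⟨?_, ?_⟩, hI'.out ?_ ?_⟩
  · exact (min_le_left _ _).trans_lt (by linarith)
  · exact lt_of_lt_of_le (by linarith) (le_max_left _ _)
  · exact (min_le_right _ _).trans_lt (by linarith)
  · exact lt_of_lt_of_le (by linarith) (le_max_right _ _)
  · rcases min_choice (s - ε) (t - δ) with h | h <;> rw [h] <;> assumption
  · rcases max_choice (s + ε) (t + δ) with h | h <;> rw [h] <;> assumption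

/-- Parallel transport of an analytic skew-symmetric connection. -/
theorem exists_orthogonal_transport {ι : Type*} [Fintype ι] [DecidableEq ι]
    {Ω : ℝ → Matrix ι ι ℝ} {I : Set ℝ} (hI : IsOpen I) (hI' : I.OrdConnected)
    (hΩ : AnalyticOnNhd ℝ Ω I) (hskew : ∀ t ∈ I, (Ω t)ᵀ = -Ω t) :
    ∃ Q : ℝ → Matrix ι ι ℝ, AnalyticOnNhd ℝ Q I ∧
      (∀ t ∈ I, HasDerivAt Q (Ω t * Q t) t ∧ (Q t)ᵀ * Q t = 1) ∧
      ∀ J : Matrix ι ι ℝ, (∀ t ∈ I, Commute J (Ω t)) → ∀ t ∈ I, Commute J (Q t) := by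
  rcases I.eq_empty_or_nonempty with rfl | ⟨t₀, ht₀⟩
  · exact ⟨fun _ => 1, by simp [AnalyticOnNhd], by simp, by simp⟩
  choose! a b h0 ht hsub using fun t => exists_Ioo_of_isOpen_ordConnected hI hI' (s := t₀) (t := t) ht₀
  have hex : ∀ t, t ∈ I → ∃ Q : ℝ → Matrix ι ι ℝ, Q t₀ = 1 ∧
      ∀ s ∈ Set.Ioo (a t) (b t), HasDerivAt Q (Ω s * Q s) s := fun t hti =>
    exists_orthogonal_transport_Ioo (h0 t hti) (hΩ.continuousOn.mono (hsub t hti))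
      fun s hs => hskew s (hsub t hti hs)
  choose! P hP0 hP using hex
  have hcross : ∀ J : Matrix ι ι ℝ, (∀ t ∈ I, Commute J (Ω t)) → ∀ t ∈ I, ∀ r ∈ I, ∀ s ∈ Set.Ioo (a t) (b t),
      s ∈ Set.Ioo (a r) (b r) → (P t s)ᵀ * J * P r s = J := by
    intro J hJ t hti r hri s hs hs'
    have := eq_of_hasDerivAt_zero (S := Set.Ioo (a t) (b t) ∩ Set.Ioo (a r) (b r))
      (isOpen_Ioo.inter isOpen_Ioo) (Set.ordConnected_Ioo.inter Set.ordConnected_Ioo)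
      (f := fun s => (P t s)ᵀ * J * P r s) (fun u hu => ?_) ⟨hs, hs'⟩ ⟨h0 t hti, h0 r hri⟩
    · rw [this, hP0 t hti, hP0 r hri]; simp
    · have huI := hsub t hti (Set.Ioo_subset_Icc_self hu.1)
      refine HasDerivAt.transpose_mul_of_skew (c := 1) (hskew u huI) (hJ u huI) ?_ ?_
      · simpa using hP t hti u hu.1
      · simpa using hP r hri u hu.2
  have hone : ∀ t ∈ I, ∀ r ∈ I, ∀ s ∈ Set.Ioo (a t) (b t),
      s ∈ Set.Ioo (a r) (b r) → (P t s)ᵀ * P r s = 1 := fun t hti r hri s hs hs' => by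
    simpa using hcross 1 (fun _ _ => Commute.one_left _) t hti r hri s hs hs'
  have hagree : ∀ t ∈ I, ∀ s ∈ Set.Ioo (a t) (b t), P s s = P t s := fun t hti s hs => by
    have hsI := hsub t hti (Set.Ioo_subset_Icc_self hs)
    have h1 := hone t hti s hsI s hs (ht s hsI)
    have h2 := mul_eq_one_comm.1 (hone t hti t hti s hs hs)
    calc P s s = P t s * (P t s)ᵀ * P s s := by rw [h2, one_mul]
      _ = P t s := by rw [mul_assoc, h1, mul_one]
  have hderiv : ∀ t ∈ I, HasDerivAt (fun s => P s s) (Ω t * P t t) t := fun t hti =>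
    (hP t hti t (ht t hti)).congr_of_eventuallyEq
      (eventually_of_mem (Ioo_mem_nhds (ht t hti).1 (ht t hti).2) (hagree t hti))
  have hone' : ∀ t ∈ I, (P t t)ᵀ * P t t = 1 := fun t hti =>
    hone t hti t hti t (ht t hti) (ht t hti)
  refine ⟨fun t => P t t, fun t hti => ?_, fun t hti => ⟨hderiv t hti, hone' t hti⟩,
    fun J hJ t hti => ?_⟩
  · have hF : AnalyticAt ℝ (fun v : ℝ × Matrix ι ι ℝ => ((1 : ℝ), Ω v.1 * v.2)) (t, P t t) :=
      analyticAt_const.prod (((hΩ t hti).fun_comp_of_eq analyticAt_fst rfl).matrix_mul analyticAt_snd)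
    have := analyticAt_of_eventually_hasDerivAt (x := fun s => (s, P s s)) (t₀ := t) hF
      (eventually_of_mem (hI.mem_nhds hti) fun s hs => (hasDerivAt_id s).prodMk (hderiv s hs))
    exact analyticAt_snd.comp this
  · have h1 := hcross J hJ t hti t hti t (ht t hti) (ht t hti)
    have h2 := mul_eq_one_comm.1 (hone' t hti)
    calc J * P t t = (P t t * (P t t)ᵀ) * J * P t t := by rw [h2, one_mul]
      _ = P t t * ((P t t)ᵀ * J * P t t) := by simp only [mul_assoc]
      _ = P t t * J := by rw [h1]

/-- An analytic curve of symmetric matrices that commutes with its derivative has locally constant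
eigenspaces. -/
theorem AnalyticAt.exists_const_diagonalization {ι : Type*} [Fintype ι] [DecidableEq ι]
    {C : ℝ → Matrix ι ι ℝ} {t₀ : ℝ} (hC : AnalyticAt ℝ C t₀)
    (hsymm : ∀ᶠ t in 𝓝 t₀, (C t)ᵀ = C t) (hcomm : ∀ᶠ t in 𝓝 t₀, Commute (deriv C t) (C t)) :
    ∃ S : Matrix ι ι ℝ, Sᵀ * S = 1 ∧ ∀ᶠ t in 𝓝 t₀, (Sᵀ * C t * S).IsDiag := by
  obtain ⟨U, K, d, hU, hK, hd, h⟩ := hC.exists_eigenframe hsymm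
  have hKd : ∀ r s, (∀ᶠ t in 𝓝 t₀, d t r = d t s) ∨ ∀ᶠ t in 𝓝 t₀, K t r s = 0 := by
    intro r s
    refine ((hd r).eventually_eq_or_eventually_ne_real (hd s)).imp_right fun hne => ?_
    refine ((analyticAt_matrix_iff.1 hK r s).continuousAt.eventuallyEq_nhds_iff_eventuallyEq_nhdsNE
      continuousAt_const).1 ?_
    filter_upwards [hne, eventually_nhdsWithin_of_eventually_nhds h,
      eventually_nhdsWithin_of_eventually_nhds hcomm] with t h1 ⟨hu, _, _, hCt, d', hC'⟩ h3
    rw [show deriv C t = _ from hC'.deriv, hCt] at h3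
    have h4 := congrArg (fun M => (U t)ᵀ * M * U t) h3.eq
    have e : ∀ M N : Matrix ι ι ℝ, (U t)ᵀ * ((U t * M * (U t)ᵀ) * (U t * N * (U t)ᵀ)) * U t =
        M * N := fun M N => by
      calc _ = ((U t)ᵀ * U t) * M * ((U t)ᵀ * U t) * N * ((U t)ᵀ * U t) := by
            simp only [mul_assoc]
        _ = _ := by rw [hu, mul_one, mul_one, one_mul]
    simp only [e] at h4
    have h5 := congrFun (congrFun h4 r) s
    simp only [mul_diagonal, diagonal_mul, Matrix.add_apply, Matrix.sub_apply] at h5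
    have hrs : r ≠ s := fun hrs => h1 (by rw [hrs])
    rw [diagonal_apply_ne _ hrs, zero_add] at h5
    have h6 : K t r s * (d t r - d t s) ^ 2 = 0 := by linear_combination h5
    exact (mul_eq_zero.1 h6).resolve_right (pow_ne_zero _ (sub_ne_zero.2 h1))
  have hKd' : ∀ᶠ t in 𝓝 t₀, ∀ r s, (∀ᶠ t in 𝓝 t₀, d t r = d t s) ∨ K t r s = 0 := by
    refine eventually_all.2 fun r => eventually_all.2 fun s => ?_
    rcases hKd r s with h1 | h1
    · exact Eventually.of_forall fun _ => Or.inl h1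
    · exact h1.mono fun _ => Or.inr
  have hE : ∀ᶠ t in 𝓝 t₀, ∀ r s, (∀ᶠ t in 𝓝 t₀, d t r = d t s) → d t r = d t s := by
    refine eventually_all.2 fun r => eventually_all.2 fun s => ?_
    by_cases h1 : ∀ᶠ t in 𝓝 t₀, d t r = d t s
    · exact h1.mono fun _ h _ => h
    · exact Eventually.of_forall fun _ h => absurd h h1
  obtain ⟨ε, hε, hball⟩ := Metric.eventually_nhds_iff_ball.1 (h.and (hKd'.and hE))
  have ht₀ : t₀ ∈ Metric.ball t₀ ε := Metric.mem_ball_self hε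
  refine ⟨U t₀, (hball t₀ ht₀).1.1, ?_⟩
  filter_upwards [Metric.ball_mem_nhds t₀ hε] with τ hτ
  have hconst : U τ * diagonal (d τ) * (U τ)ᵀ = U t₀ * diagonal (d τ) * (U t₀)ᵀ := by
    refine eq_of_hasDerivAt_zero (S := Metric.ball t₀ ε)
      (f := fun t => U t * diagonal (d τ) * (U t)ᵀ) Metric.isOpen_ball
      (convex_ball t₀ ε).ordConnected (fun t ht => ?_) hτ ht₀
    obtain ⟨⟨-, hKs, hU', -⟩, hK0, -⟩ := hball t ht
    refine ((hU'.matrix_mul (hasDerivAt_const t (diagonal (d τ)))).matrix_mul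
      hU'.matrix_transpose).congr_deriv ?_
    have : K t * diagonal (d τ) = diagonal (d τ) * K t := by
      ext r s
      rw [mul_diagonal, diagonal_mul]
      rcases hK0 r s with h1 | h1
      · rw [(hball τ hτ).2.2 r s h1, mul_comm]
      · rw [h1, mul_zero, zero_mul]
    rw [Matrix.transpose_mul, hKs, mul_zero, add_zero, mul_assoc (U t) (K t), this]
    noncomm_ring
  rw [(hball τ hτ).1.2.2.2.1, hconst]
  have hu := (hball t₀ ht₀).1.1
  have : (U t₀)ᵀ * (U t₀ * diagonal (d τ) * (U t₀)ᵀ) * U t₀ = diagonal (d τ) := by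
    calc _ = ((U t₀)ᵀ * U t₀) * diagonal (d τ) * ((U t₀)ᵀ * U t₀) := by simp only [mul_assoc]
      _ = _ := by rw [hu, mul_one, one_mul]
  rw [this]
  exact isDiag_diagonal _

/-- All values of an analytic curve of symmetric matrices commuting with its derivative are obtained
from one generic value by an odd functional calculus. -/
theorem AnalyticOnNhd.exists_generic_point {ι : Type*} [Fintype ι] [DecidableEq ι]
    {C : ℝ → Matrix ι ι ℝ} {I : Set ℝ} (hI : IsOpen I) (hI' : I.OrdConnected) (hne : I.Nonempty)
    (hC : AnalyticOnNhd ℝ C I) (hsymm : ∀ t ∈ I, (C t)ᵀ = C t)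
    (hcomm : ∀ t ∈ I, Commute (deriv C t) (C t)) :
    ∃ t₁ ∈ I, ∀ t ∈ I, ∃ G : Matrix ι ι ℝ, C t = C t₁ * G ∧
      ∀ X, Commute X (C t₁ * C t₁) → Commute X G := by
  obtain ⟨t₀, ht₀⟩ := hne
  have hev : ∀ᶠ t in 𝓝 t₀, t ∈ I := hI.mem_nhds ht₀
  have hid : ∀ {f : ℝ → ℝ}, AnalyticOnNhd ℝ f I → (∀ᶠ t in 𝓝 t₀, f t = 0) → ∀ t ∈ I, f t = 0 :=
    fun hf h t ht => hf.eqOn_zero_of_preconnected_of_eventuallyEq_zero hI'.isPreconnected ht₀ h ht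
  obtain ⟨S, hS, hdiag⟩ := (hC t₀ ht₀).exists_const_diagonalization (hev.mono hsymm)
    (hev.mono hcomm)
  have hS' : S * Sᵀ = 1 := mul_eq_one_comm.1 hS
  have hD : ∀ i j, AnalyticOnNhd ℝ (fun t => (Sᵀ * C t * S) i j) I := fun i j t ht =>
    analyticAt_matrix_iff.1
      ((analyticAt_const.matrix_mul (hC t ht)).matrix_mul analyticAt_const) i j
  let d : ℝ → ι → ℝ := fun t i => (Sᵀ * C t * S) i i
  have hCd : ∀ t ∈ I, C t = S * diagonal (d t) * Sᵀ := fun t ht => by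
    have h1 : (Sᵀ * C t * S).IsDiag := fun i j hij =>
      hid (hD i j) (hdiag.mono fun s hs => hs hij) t ht
    have h2 : diagonal (d t) = Sᵀ * C t * S := h1.diagonal_diag
    calc C t = (S * Sᵀ) * C t * (S * Sᵀ) := by rw [hS', one_mul, mul_one]
      _ = _ := by rw [h2]; simp only [mul_assoc]
  have hgen : ∀ {f : ℝ → ℝ}, AnalyticOnNhd ℝ f I →
      ∀ᶠ t in 𝓝[≠] t₀, f t = 0 → ∀ s ∈ I, f s = 0 := fun {f} hf => by
    rcases (hf t₀ ht₀).eventually_eq_zero_or_eventually_ne_zero with h | h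
    · exact Eventually.of_forall fun _ _ => hid hf h
    · exact h.mono fun t h1 h2 => absurd h2 h1
  have hall : ∀ᶠ t in 𝓝[≠] t₀, (∀ r, d t r = 0 → ∀ s ∈ I, d s r = 0) ∧
      ∀ r q, (d t r - d t q = 0 → ∀ s ∈ I, d s r - d s q = 0) ∧
        (d t r + d t q = 0 → ∀ s ∈ I, d s r + d s q = 0) := by
    refine (eventually_all.2 fun r => hgen (hD r r)).and (eventually_all.2 fun r =>
      eventually_all.2 fun q => (hgen ?_).and (hgen ?_))
    · exact fun t ht => (hD r r t ht).sub (hD q q t ht)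
    · exact fun t ht => (hD r r t ht).add (hD q q t ht)
  obtain ⟨t₁, ⟨h0, hrq⟩, ht₁⟩ := (hall.and (eventually_nhdsWithin_of_eventually_nhds hev)).exists
  refine ⟨t₁, ht₁, fun t ht => ⟨S * diagonal (fun r => d t r / d t₁ r) * Sᵀ, ?_, fun X hX => ?_⟩⟩
  · have e : diagonal (d t) = diagonal (d t₁) * diagonal (fun r => d t r / d t₁ r) := by
      rw [diagonal_mul_diagonal]
      congr 1
      funext r
      by_cases hr : d t₁ r = 0
      · rw [hr, zero_mul, h0 r hr t ht]
      · field_simp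
    rw [hCd t ht, hCd t₁ ht₁, e]
    calc _ = S * diagonal (d t₁) * 1 * diagonal (fun r => d t r / d t₁ r) * Sᵀ := by
          simp only [mul_assoc, one_mul]
      _ = _ := by rw [← hS]; simp only [mul_assoc]
  · have e : C t₁ * C t₁ = S * diagonal (fun r => d t₁ r * d t₁ r) * Sᵀ := by
      rw [hCd t₁ ht₁, ← diagonal_mul_diagonal]
      calc _ = S * diagonal (d t₁) * (Sᵀ * S) * diagonal (d t₁) * Sᵀ := by simp only [mul_assoc]
        _ = _ := by rw [hS, mul_one]; simp only [mul_assoc]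
    have key : ∀ γ : ι → ℝ, Commute X (S * diagonal γ * Sᵀ) ↔
        ∀ r q, (Sᵀ * X * S) r q * γ q = γ r * (Sᵀ * X * S) r q := fun γ => by
      have h1 : ∀ r q, ((Sᵀ * X * S) r q * γ q = γ r * (Sᵀ * X * S) r q) ↔
          ((Sᵀ * X * S) * diagonal γ) r q = (diagonal γ * (Sᵀ * X * S)) r q := fun r q => by
        rw [mul_diagonal, diagonal_mul]
      simp only [h1, Matrix.ext_iff, commute_iff_eq]
      constructor
      · intro h
        calc _ = Sᵀ * (X * (S * diagonal γ * Sᵀ)) * S := by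
              simp only [mul_assoc, hS, mul_one]
          _ = (Sᵀ * S) * diagonal γ * (Sᵀ * X * S) := by rw [h]; simp only [mul_assoc]
          _ = _ := by rw [hS, one_mul]
      · intro h
        calc X * (S * diagonal γ * Sᵀ) = (S * Sᵀ) * X * (S * diagonal γ * Sᵀ) := by
              rw [hS', one_mul]
          _ = S * ((Sᵀ * X * S) * diagonal γ) * Sᵀ := by simp only [mul_assoc]
          _ = S * diagonal γ * Sᵀ * X * (S * Sᵀ) := by rw [h]; simp only [mul_assoc]
          _ = _ := by rw [hS', mul_one]
    rw [e, key] at hX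
    rw [key]
    intro r q
    have h1 : (Sᵀ * X * S) r q * ((d t₁ r - d t₁ q) * (d t₁ r + d t₁ q)) = 0 := by
      linear_combination -hX r q
    rcases mul_eq_zero.1 h1 with h2 | h2
    · rw [h2, zero_mul, mul_zero]
    · have h3 : d t q / d t₁ q = d t r / d t₁ r := by
        rcases mul_eq_zero.1 h2 with h3 | h3
        · rw [sub_eq_zero.1 ((hrq r q).1 h3 t ht), sub_eq_zero.1 h3]
        · rw [eq_neg_of_add_eq_zero_left ((hrq r q).2 h3 t ht), eq_neg_of_add_eq_zero_left h3,
            neg_div_neg_eq]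
      rw [h3, mul_comm]

/-- A matrix with mutually orthogonal columns is a matrix with orthonormal columns times a diagonal
matrix. -/
theorem Matrix.exists_orthonormal_mul_diagonal {m n : Type*} [Fintype m] [DecidableEq m]
    [Fintype n] [DecidableEq n] (hmn : Fintype.card n ≤ Fintype.card m) {N : Matrix m n ℝ}
    {μ : n → ℝ} (hN : Nᵀ * N = diagonal μ) :
    ∃ (P : Matrix m n ℝ) (ν : n → ℝ), Pᵀ * P = 1 ∧ N = P * diagonal ν := by
  obtain ⟨f⟩ := Function.Embedding.nonempty_of_card_le hmn
  have hdot : ∀ r q, ∑ i, N i r * N i q = diagonal μ r q := fun r q => by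
    rw [← hN]; simp [Matrix.mul_apply]
  let w : n → EuclideanSpace ℝ m := fun r => WithLp.toLp 2 fun i => N i r
  have hw : ∀ r q, inner ℝ (w r) (w q) = diagonal μ r q := fun r q => by
    rw [← hdot, PiLp.inner_apply]
    simp [w, mul_comm]
  let v : m → EuclideanSpace ℝ m := Function.extend f (fun r => (‖w r‖)⁻¹ • w r) 0
  have hv : ∀ r, v (f r) = (‖w r‖)⁻¹ • w r := fun r => f.injective.extend_apply _ _ r
  have hon : Orthonormal ℝ ((f '' {r | w r ≠ 0}).domRestrict v) := by
    constructor
    · rintro ⟨_, r, hr, rfl⟩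
      show ‖v (f r)‖ = 1
      rw [hv, norm_smul, norm_inv, norm_norm]
      exact inv_mul_cancel₀ (norm_ne_zero_iff.2 hr)
    · rintro ⟨_, r, hr, rfl⟩ ⟨_, q, hq, rfl⟩ hrq
      have : r ≠ q := fun h => hrq (by simp [h])
      show inner ℝ (v (f r)) (v (f q)) = 0
      rw [hv, hv, real_inner_smul_left,
        real_inner_smul_right, hw, diagonal_apply_ne _ this, mul_zero, mul_zero]
  obtain ⟨b, hb⟩ := hon.exists_orthonormalBasis_extension_of_card_eq (by simp)
  refine ⟨of fun i r => b (f r) i, fun r => ‖w r‖, ?_, ?_⟩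
  · ext r q
    have h1 : inner ℝ (b (f r)) (b (f q)) = if f r = f q then (1 : ℝ) else 0 :=
      orthonormal_iff_ite.1 b.orthonormal _ _
    rw [PiLp.inner_apply] at h1
    simp only [f.injective.eq_iff] at h1
    rw [Matrix.one_apply, ← h1]
    simp [Matrix.mul_apply, mul_comm]
  · ext i r
    rw [mul_diagonal, of_apply]
    by_cases hr : w r = 0
    · rw [hr, norm_zero, mul_zero]
      exact congrArg (fun x : EuclideanSpace ℝ m => x i) hr
    · rw [hb (f r) ⟨r, hr, rfl⟩, hv, PiLp.smul_apply, smul_eq_mul, mul_comm, mul_inv_cancel_left₀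
        (norm_ne_zero_iff.2 hr)]

/-- An analytic curve of tall real matrices on an open interval has an analytic singular value
decomposition. -/
theorem AnalyticOnNhd.exists_analytic_svd_of_card_le {m n : Type*} [Fintype m] [DecidableEq m]
    [Fintype n] [DecidableEq n] (hmn : Fintype.card n ≤ Fintype.card m)
    {A : ℝ → Matrix m n ℝ} {I : Set ℝ} (hI : IsOpen I) (hI' : I.OrdConnected)
    (hA : AnalyticOnNhd ℝ A I) :
    ∃ (U : ℝ → Matrix m n ℝ) (σ : ℝ → n → ℝ) (V : ℝ → Matrix n n ℝ),
      AnalyticOnNhd ℝ U I ∧ AnalyticOnNhd ℝ σ I ∧ AnalyticOnNhd ℝ V I ∧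
      ∀ t ∈ I, A t = U t * diagonal (σ t) * (V t)ᵀ ∧ (U t)ᵀ * U t = 1 ∧ (V t)ᵀ * V t = 1 := by
  rcases I.eq_empty_or_nonempty with rfl | hne
  · exact ⟨0, 0, 0, by simp [AnalyticOnNhd], by simp [AnalyticOnNhd], by simp [AnalyticOnNhd],
      by simp⟩
  let H : ℝ → Matrix (m ⊕ n) (m ⊕ n) ℝ := fun t => fromBlocks 0 (A t) (A t)ᵀ 0
  have hH : AnalyticOnNhd ℝ H I := fun t ht => by
    have h1 := analyticAt_matrix_iff.1 (hA t ht)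
    rw [analyticAt_matrix_iff]
    rintro (i | i) (j | j)
    · exact analyticAt_const
    · exact h1 i j
    · exact h1 j i
    · exact analyticAt_const
  have hHs : ∀ t, (H t)ᵀ = H t := fun t => by simp [H, fromBlocks_transpose]
  obtain ⟨Ω, hΩ, hskew, hcomm, hanti⟩ := exists_analytic_eigenConnection hI hH fun t _ => hHs t
  obtain ⟨Q, hQ, hQ', hQJ⟩ := exists_orthogonal_transport hI hI' hΩ hskew
  let J : Matrix (m ⊕ n) (m ⊕ n) ℝ := fromBlocks 1 0 0 (-1)
  have hJQ : ∀ t ∈ I, Commute J (Q t) := hQJ J <| hanti J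
    (by simp [J, fromBlocks_multiply]) fun t _ => by
      simp [J, H, fromBlocks_multiply, fromBlocks_neg]
  let C : ℝ → Matrix (m ⊕ n) (m ⊕ n) ℝ := fun t => (Q t)ᵀ * H t * Q t
  have hC : AnalyticOnNhd ℝ C I := fun t ht =>
    ((hQ t ht).matrix_transpose.matrix_mul (hH t ht)).matrix_mul (hQ t ht)
  have hCd : ∀ t ∈ I, HasDerivAt C
      ((Q t)ᵀ * (deriv H t - (Ω t * H t - H t * Ω t)) * Q t) t := fun t ht => by
    refine (((hQ' t ht).1.matrix_transpose.matrix_mul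
      (hH t ht).differentiableAt.hasDerivAt).matrix_mul (hQ' t ht).1).congr_deriv ?_
    rw [Matrix.transpose_mul, hskew t ht]
    have e : ∀ D : Matrix (m ⊕ n) (m ⊕ n) ℝ,
        ((Q t)ᵀ * -Ω t * H t + (Q t)ᵀ * D) * Q t + (Q t)ᵀ * H t * (Ω t * Q t) =
          (Q t)ᵀ * (D - (Ω t * H t - H t * Ω t)) * Q t := fun D => by
      noncomm_ring
    exact e _
  obtain ⟨t₁, ht₁, hgen⟩ := hC.exists_generic_point hI hI' hne
    (fun t _ => by simp [C, hHs, mul_assoc]) fun t ht => by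
      rw [show deriv C t = _ from (hCd t ht).deriv, commute_iff_eq]
      have hq : Q t * (Q t)ᵀ = 1 := mul_eq_one_comm.1 (hQ' t ht).2
      have e : ∀ M N : Matrix (m ⊕ n) (m ⊕ n) ℝ,
          (Q t)ᵀ * M * Q t * ((Q t)ᵀ * N * Q t) = (Q t)ᵀ * (M * N) * Q t := fun M N => by
        calc _ = (Q t)ᵀ * M * (Q t * (Q t)ᵀ) * N * Q t := by simp only [mul_assoc]
          _ = _ := by rw [hq, mul_one]; simp only [mul_assoc]
      rw [e, e, (hcomm t ht).eq]
  have hblk : ∀ M : Matrix (m ⊕ n) (m ⊕ n) ℝ, Commute J M →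
      M.toBlocks₁₂ = 0 ∧ M.toBlocks₂₁ = 0 := fun M hM => by
    have h1 := hM.eq
    rw [← fromBlocks_toBlocks M, fromBlocks_multiply, fromBlocks_multiply, fromBlocks_inj] at h1
    simp only [Matrix.one_mul, Matrix.mul_one, Matrix.zero_mul, Matrix.mul_zero, Matrix.mul_neg, Matrix.neg_mul,
      add_zero, zero_add] at h1
    refine ⟨?_, ?_⟩ <;> ext i j
    · have h2 := congrFun (congrFun h1.2.1 i) j
      exact self_eq_neg.1 h2
    · have h2 := congrFun (congrFun h1.2.2.1 i) j
      exact neg_eq_self.1 h2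
  let Q₁ : ℝ → Matrix m m ℝ := fun t => (Q t).toBlocks₁₁
  let Q₂ : ℝ → Matrix n n ℝ := fun t => (Q t).toBlocks₂₂
  have hQblk : ∀ t ∈ I, Q t = fromBlocks (Q₁ t) 0 0 (Q₂ t) := fun t ht => by
    conv_lhs => rw [← fromBlocks_toBlocks (Q t), (hblk _ (hJQ t ht)).1, (hblk _ (hJQ t ht)).2]
  have hQ12 : ∀ t ∈ I, (Q₁ t)ᵀ * Q₁ t = 1 ∧ (Q₂ t)ᵀ * Q₂ t = 1 := fun t ht => by
    have h1 := (hQ' t ht).2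
    rw [hQblk t ht, fromBlocks_transpose, fromBlocks_multiply, ← fromBlocks_one,
      fromBlocks_inj] at h1
    simpa using And.intro h1.1 h1.2.2.2
  let c : ℝ → Matrix m n ℝ := fun t => (Q₁ t)ᵀ * A t * Q₂ t
  have hCc : ∀ t ∈ I, C t = fromBlocks 0 (c t) (c t)ᵀ 0 := fun t ht => by
    simp only [C, H, c]
    rw [hQblk t ht, fromBlocks_transpose, fromBlocks_multiply, fromBlocks_multiply]
    simp [Matrix.mul_assoc]
  obtain ⟨R, μ, hR, hRμ⟩ := exists_orthogonal_diagonalization_s7 (A := (c t₁)ᵀ * c t₁) (by simp)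
  have hR' : R * Rᵀ = 1 := mul_eq_one_comm.1 hR
  obtain ⟨P, ν, hP, hPν⟩ := Matrix.exists_orthonormal_mul_diagonal hmn (N := c t₁ * R) (μ := μ)
    (by rw [← hRμ, Matrix.transpose_mul]; simp only [Matrix.mul_assoc])
  have hcR : ∀ t ∈ I, ∃ γ : n → ℝ, c t * R = P * diagonal γ := fun t ht => by
    obtain ⟨G, hG, hGX⟩ := hgen t ht
    have hsq : C t₁ * C t₁ = fromBlocks (c t₁ * (c t₁)ᵀ) 0 0 ((c t₁)ᵀ * c t₁) := by
      rw [hCc t₁ ht₁, fromBlocks_multiply]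
      simp
    have hG22 : c t = c t₁ * G.toBlocks₂₂ := by
      rw [hCc t ht, hCc t₁ ht₁, ← fromBlocks_toBlocks G, fromBlocks_multiply, fromBlocks_inj] at hG
      simpa using hG.2.1
    have hX : ∀ δ : n → ℝ, Commute (R * diagonal δ * Rᵀ) G.toBlocks₂₂ := fun δ => by
      have hc1 : (c t₁)ᵀ * c t₁ = R * diagonal μ * Rᵀ := by
        rw [← hRμ]
        calc (c t₁)ᵀ * c t₁ = (R * Rᵀ) * ((c t₁)ᵀ * c t₁) * (R * Rᵀ) := by
              rw [hR', one_mul, mul_one]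
          _ = _ := by simp only [Matrix.mul_assoc]
      have h1 := hGX (fromBlocks 0 0 0 (R * diagonal δ * Rᵀ)) (by
        rw [hsq, commute_iff_eq, fromBlocks_multiply, fromBlocks_multiply, hc1]
        have e : ∀ x y : n → ℝ, R * diagonal x * Rᵀ * (R * diagonal y * Rᵀ) =
            R * diagonal (fun i => x i * y i) * Rᵀ := fun x y => by
          calc _ = R * diagonal x * (Rᵀ * R) * diagonal y * Rᵀ := by simp only [mul_assoc]
            _ = _ := by rw [hR, mul_one, mul_assoc R, diagonal_mul_diagonal]
        simp [e, mul_comm])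
      have h2 := h1.eq
      rw [← fromBlocks_toBlocks G, fromBlocks_multiply, fromBlocks_multiply, fromBlocks_inj] at h2
      simpa [commute_iff_eq] using h2.2.2.2
    have hdiag : (Rᵀ * G.toBlocks₂₂ * R).IsDiag := fun i j hij => by
      have h1 := congrArg (fun M => Rᵀ * M * R) (hX (Pi.single i 1)).eq
      have h2 : diagonal (Pi.single i 1) * (Rᵀ * G.toBlocks₂₂ * R) =
          (Rᵀ * G.toBlocks₂₂ * R) * diagonal (Pi.single i 1) := by
        calc _ = (Rᵀ * R) * diagonal (Pi.single i 1) * (Rᵀ * G.toBlocks₂₂ * R) := by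
              rw [hR, one_mul]
          _ = Rᵀ * (R * diagonal (Pi.single i 1) * Rᵀ * G.toBlocks₂₂) * R := by
              simp only [mul_assoc]
          _ = Rᵀ * (G.toBlocks₂₂ * (R * diagonal (Pi.single i 1) * Rᵀ)) * R := h1
          _ = (Rᵀ * G.toBlocks₂₂ * R) * diagonal (Pi.single i 1) * (Rᵀ * R) := by
              simp only [mul_assoc]
          _ = _ := by rw [hR, mul_one]
      have h3 := congrFun (congrFun h2 i) j
      rw [diagonal_mul, mul_diagonal] at h3
      simpa [Pi.single_apply, hij.symm] using h3
    refine ⟨fun r => ν r * (Rᵀ * G.toBlocks₂₂ * R) r r, ?_⟩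
    have h4 : diagonal (fun r => (Rᵀ * G.toBlocks₂₂ * R) r r) = Rᵀ * G.toBlocks₂₂ * R :=
      hdiag.diagonal_diag
    rw [← diagonal_mul_diagonal, ← Matrix.mul_assoc, ← hPν, h4, hG22]
    calc _ = c t₁ * (1 * G.toBlocks₂₂) * R := by rw [one_mul]
      _ = _ := by rw [← hR']; simp only [Matrix.mul_assoc]
  have hQ₁ : AnalyticOnNhd ℝ Q₁ I := fun t ht => (hQ t ht).matrix_submatrix Sum.inl Sum.inl
  have hQ₂ : AnalyticOnNhd ℝ Q₂ I := fun t ht => (hQ t ht).matrix_submatrix Sum.inr Sum.inr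
  refine ⟨fun t => Q₁ t * P, fun t r => (Pᵀ * (c t * R)) r r, fun t => Q₂ t * R,
    fun t ht => (hQ₁ t ht).matrix_mul analyticAt_const, fun t ht => ?_,
    fun t ht => (hQ₂ t ht).matrix_mul analyticAt_const, fun t ht => ⟨?_, ?_, ?_⟩⟩
  · have h1 : AnalyticAt ℝ (fun t => Pᵀ * (c t * R)) t := analyticAt_const.matrix_mul
      ((((hQ₁ t ht).matrix_transpose.matrix_mul (hA t ht)).matrix_mul (hQ₂ t ht)).matrix_mul
        analyticAt_const)
    exact analyticAt_pi_iff.2 fun r => analyticAt_matrix_iff.1 h1 r r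
  · obtain ⟨γ, hγ⟩ := hcR t ht
    have h1 : (fun r => (Pᵀ * (c t * R)) r r) = γ := by
      funext r
      rw [hγ, ← Matrix.mul_assoc, hP, one_mul, diagonal_apply_eq]
    have hq1 : Q₁ t * (Q₁ t)ᵀ = 1 := mul_eq_one_comm.1 (hQ12 t ht).1
    have hq2 : Q₂ t * (Q₂ t)ᵀ = 1 := mul_eq_one_comm.1 (hQ12 t ht).2
    show A t = Q₁ t * P * diagonal (fun r => (Pᵀ * (c t * R)) r r) * (Q₂ t * R)ᵀ
    rw [h1]
    calc A t = (Q₁ t * (Q₁ t)ᵀ) * A t * (Q₂ t * 1 * (Q₂ t)ᵀ) := by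
          rw [mul_one, hq1, hq2, Matrix.one_mul, Matrix.mul_one]
      _ = Q₁ t * (c t * R) * (Q₂ t * R)ᵀ := by
          rw [← hR', Matrix.transpose_mul]; simp only [c, Matrix.mul_assoc]
      _ = _ := by rw [hγ]; simp only [Matrix.mul_assoc]
  · rw [Matrix.transpose_mul, Matrix.mul_assoc, ← Matrix.mul_assoc (Q₁ t)ᵀ, (hQ12 t ht).1,
      Matrix.one_mul, hP]
  · rw [Matrix.transpose_mul, Matrix.mul_assoc, ← Matrix.mul_assoc (Q₂ t)ᵀ, (hQ12 t ht).2,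
      Matrix.one_mul, hR]

/-- An analytic curve of real matrices on an open interval has an analytic singular value
decomposition. -/
theorem AnalyticOnNhd.exists_analytic_svd {m n : ℕ} {A : ℝ → Matrix (Fin m) (Fin n) ℝ} {I : Set ℝ}
    (hI : IsOpen I) (hI' : I.OrdConnected) (hA : AnalyticOnNhd ℝ A I) :
    ∃ (U : ℝ → Matrix (Fin m) (Fin (min m n)) ℝ) (σ : ℝ → Fin (min m n) → ℝ)
      (V : ℝ → Matrix (Fin n) (Fin (min m n)) ℝ),
      AnalyticOnNhd ℝ U I ∧ AnalyticOnNhd ℝ σ I ∧ AnalyticOnNhd ℝ V I ∧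
      ∀ t ∈ I, A t = U t * diagonal (σ t) * (V t)ᵀ ∧ (U t)ᵀ * U t = 1 ∧ (V t)ᵀ * V t = 1 := by
  suffices h : ∀ k, k = min m n → ∃ (U : ℝ → Matrix (Fin m) (Fin k) ℝ) (σ : ℝ → Fin k → ℝ)
      (V : ℝ → Matrix (Fin n) (Fin k) ℝ),
      AnalyticOnNhd ℝ U I ∧ AnalyticOnNhd ℝ σ I ∧ AnalyticOnNhd ℝ V I ∧
      ∀ t ∈ I, A t = U t * diagonal (σ t) * (V t)ᵀ ∧ (U t)ᵀ * U t = 1 ∧ (V t)ᵀ * V t = 1 from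
    h _ rfl
  intro k hk
  rcases le_total n m with h | h
  · obtain rfl : k = n := hk.trans (min_eq_right h)
    exact hA.exists_analytic_svd_of_card_le (by simpa using h) hI hI'
  · obtain rfl : k = m := hk.trans (min_eq_left h)
    obtain ⟨U, σ, V, hU, hσ, hV, hsvd⟩ :=
      AnalyticOnNhd.exists_analytic_svd_of_card_le (A := fun t => (A t)ᵀ) (by simpa using h) hI hI'
        fun t ht => (hA t ht).matrix_transpose
    refine ⟨V, σ, U, hV, hσ, hU, fun t ht => ?_⟩
    obtain ⟨h1, h2, h3⟩ := hsvd t ht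
    refine ⟨?_, h3, h2⟩
    rw [← transpose_transpose (A t), h1]
    simp [Matrix.mul_assoc]

theorem analyticAt_chainProd {E : Type*} [NormedAddCommGroup E] [NormedSpace ℝ E]
    {dims : ℕ → ℕ} {X : (j : ℕ) → E → Matrix (Fin (dims j)) (Fin (dims (j - 1))) ℝ} {x : E}
    {lo hi : ℕ} (hX : ∀ j, lo < j → j ≤ hi → AnalyticAt ℝ (X j) x) (h : lo ≤ hi) :
    AnalyticAt ℝ (fun y => chainProd dims (fun j => X j y) lo hi) x := by
  induction hi with
  | zero =>
    obtain rfl : lo = 0 := by omega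
    simp only [chainProd]
    exact analyticAt_const
  | succ n ih =>
    by_cases hn : n + 1 = lo
    · subst hn
      simp only [chainProd]
      exact analyticAt_const
    · simp only [chainProd, dif_neg hn]
      exact (hX (n + 1) (by omega) le_rfl).matrix_mul
        (ih (fun j h1 h2 => hX j h1 (by omega)) (by omega))

theorem chainProd_congr {dims : ℕ → ℕ}
    {X Y : (j : ℕ) → Matrix (Fin (dims j)) (Fin (dims (j - 1))) ℝ}
    {lo hi : ℕ} (hXY : ∀ j, lo < j → j ≤ hi → X j = Y j) (h : lo ≤ hi) :
    chainProd dims X lo hi = chainProd dims Y lo hi := by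
  induction hi with
  | zero => rfl
  | succ n ih =>
    by_cases hn : n + 1 = lo
    · simp only [chainProd, dif_pos hn]
    · simp only [chainProd, dif_neg hn]
      rw [hXY (n + 1) (by omega) le_rfl, ih (fun j h1 h2 => hXY j h1 (by omega)) (by omega)]

/-- The Frobenius gradient of an analytic function is analytic. -/
theorem AnalyticAt.frobenius_gradient {m n : Type*} [Fintype m] [Fintype n] [DecidableEq m]
    [DecidableEq n] {ℓ : Matrix m n ℝ → ℝ} (hℓ : AnalyticOnNhd ℝ ℓ Set.univ)
    {g : Matrix m n ℝ → Matrix m n ℝ}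
    (hg : ∀ X H, HasDerivAt (fun s : ℝ => ℓ (X + s • H)) (((g X)ᵀ * H).trace) 0)
    (X : Matrix m n ℝ) : AnalyticAt ℝ g X := by
  refine analyticAt_matrix_iff.2 fun p q => ?_
  have h1 : (fun Y => g Y p q) = fun Y => fderiv ℝ ℓ Y (single p q 1) := by
    funext Y
    have h2 : HasDerivAt (fun s : ℝ => ℓ (Y + s • single p q 1)) (fderiv ℝ ℓ Y (single p q 1)) 0 :=
      (hℓ Y trivial).differentiableAt.hasFDerivAt.hasLineDerivAt _
    rw [← (hg Y (single p q 1)).unique h2]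
    exact (by simp [Matrix.trace_mul_single] :
      g Y p q = ((g Y)ᵀ * single p q (1 : ℝ)).trace)
  rw [h1]
  exact ((ContinuousLinearMap.apply ℝ ℝ (single p q (1 : ℝ))).analyticAt _).comp
    (hℓ X trivial).fderiv

/-- Analytic SVD of the product matrix of a deep linear network under gradient flow:
if `ℓ` is real-analytic with Frobenius gradient `gradℓ`, and the factors `W j` obey the
gradient-flow equations on an open interval `I`, then the product matrix
`W_N ⋯ W_1` admits a real-analytic singular value decomposition on `I`. -/
theorem stmt7 (N : ℕ) (hN : 1 ≤ N) (dims : ℕ → ℕ)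
    (ℓ : Matrix (Fin (dims N)) (Fin (dims 0)) ℝ → ℝ)
    (hℓ : AnalyticOnNhd ℝ ℓ Set.univ)
    (gradℓ : Matrix (Fin (dims N)) (Fin (dims 0)) ℝ →
      Matrix (Fin (dims N)) (Fin (dims 0)) ℝ)
    (hgrad : ∀ Wm H, HasDerivAt (fun s : ℝ => ℓ (Wm + s • H))
      (((gradℓ Wm)ᵀ * H).trace) 0)
    (I : Set ℝ) (hI_open : IsOpen I) (hI_conn : I.OrdConnected)
    (W : (j : ℕ) → ℝ → Matrix (Fin (dims j)) (Fin (dims (j - 1))) ℝ)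
    (hW_flow : ∀ t ∈ I, ∀ j, 1 ≤ j → j ≤ N →
      ∀ (p : Fin (dims j)) (q : Fin (dims (j - 1))),
      HasDerivAt (fun s => W j s p q)
        ((-((chainProd dims (fun i => W i t) j N)ᵀ *
            gradℓ (chainProd dims (fun i => W i t) 0 N) *
            (chainProd dims (fun i => W i t) 0 (j - 1))ᵀ)) p q) t) :
    ∃ (U : ℝ → Matrix (Fin (dims N)) (Fin (min (dims N) (dims 0))) ℝ)
      (σ : ℝ → Fin (min (dims N) (dims 0)) → ℝ)
      (V : ℝ → Matrix (Fin (dims 0)) (Fin (min (dims N) (dims 0))) ℝ),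
      AnalyticOnNhd ℝ U I ∧ AnalyticOnNhd ℝ σ I ∧ AnalyticOnNhd ℝ V I ∧
      ∀ t ∈ I,
        chainProd dims (fun i => W i t) 0 N = U t * Matrix.diagonal (σ t) * (V t)ᵀ ∧
        (U t)ᵀ * U t = 1 ∧ (V t)ᵀ * V t = 1 := by
  refine AnalyticOnNhd.exists_analytic_svd hI_open hI_conn fun t ht => ?_
  let X : (j : ℕ) → ((j : Fin (N + 1)) → Matrix (Fin (dims j)) (Fin (dims (j - 1))) ℝ) →
      Matrix (Fin (dims j)) (Fin (dims (j - 1))) ℝ :=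
    fun j e => if h : j < N + 1 then e ⟨j, h⟩ else 0
  have hX : ∀ j e, AnalyticAt ℝ (X j) e := fun j e => by
    by_cases h : j < N + 1
    · simp only [X, dif_pos h]
      exact (ContinuousLinearMap.proj (R := ℝ) (φ := fun j : Fin (N + 1) =>
        Matrix (Fin (dims j)) (Fin (dims (j - 1))) ℝ) ⟨j, h⟩).analyticAt e
    · simp only [X, dif_neg h]
      exact analyticAt_const
  let G : (j : Fin (N + 1)) → ((j : Fin (N + 1)) → Matrix (Fin (dims j)) (Fin (dims (j - 1))) ℝ) →
      Matrix (Fin (dims j)) (Fin (dims (j - 1))) ℝ := fun j e =>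
    if j.1 = 0 then 0 else
      -((chainProd dims (fun i => X i e) j N)ᵀ * gradℓ (chainProd dims (fun i => X i e) 0 N) *
        (chainProd dims (fun i => X i e) 0 (j - 1))ᵀ)
  have hG : ∀ j e, AnalyticAt ℝ (G j) e := fun j e => by
    by_cases h : j.1 = 0
    · simp only [G, if_pos h]
      exact analyticAt_const
    · simp only [G, if_neg h]
      have hc : ∀ lo hi, lo ≤ hi →
          AnalyticAt ℝ (fun e => chainProd dims (fun i => X i e) lo hi) e := fun lo hi =>
        analyticAt_chainProd fun j _ _ => hX j e
      exact (((hc j N (by omega)).matrix_transpose.matrix_mul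
        ((AnalyticAt.frobenius_gradient hℓ hgrad _).comp (hc 0 N (by omega)))).matrix_mul
        (hc 0 (j - 1) (by omega)).matrix_transpose).neg
  let w : ℝ → (j : Fin (N + 1)) → Matrix (Fin (dims j)) (Fin (dims (j - 1))) ℝ :=
    fun s j => if j.1 = 0 then 0 else W j s
  have hwX : ∀ s j, 0 < j → j ≤ N → X j (w s) = W j s := fun s j h1 h2 => by
    simp [X, w, h2, h1.ne']
  have hwc : ∀ s lo hi, lo ≤ hi → hi ≤ N →
      chainProd dims (fun i => X i (w s)) lo hi = chainProd dims (fun i => W i s) lo hi :=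
    fun s lo hi h1 h2 => chainProd_congr
      (fun j h3 h4 => hwX s j (by omega) (by omega)) h1
  have hw : AnalyticAt ℝ w t := by
    refine analyticAt_of_eventually_hasDerivAt (F := fun e j => G j e)
      (analyticAt_pi_iff.2 fun j => hG j _) ?_
    filter_upwards [hI_open.mem_nhds ht] with s hs
    refine hasDerivAt_pi.2 fun j => ?_
    by_cases h : j.1 = 0
    · simp only [w, G, if_pos h]
      exact hasDerivAt_const _ _
    · simp only [w, G, if_neg h]
      refine hasDerivAt_matrix_iff.2 fun p q => ?_
      have h1 := hW_flow s hs j (by omega) (by omega) p q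
      rw [← hwc s j N (by omega) le_rfl, ← hwc s 0 N (by omega) le_rfl,
        ← hwc s 0 (j - 1) (by omega) (by omega)] at h1
      exact h1
  have h1 := analyticAt_chainProd (X := X) (lo := 0) (hi := N) (fun j _ _ => hX j (w t)) (by omega)
  have h2 := h1.comp hw
  refine h2.congr (Eventually.of_forall fun s => ?_)
  exact hwc s 0 N (by omega) le_rfl
end
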